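/- arXiv:math/0112066 — 2 statements merged into one kernel-verified Lean document; each statement's English description precedes it below -/
import Mathlib

section
/- Let S be the type of non-codegenerate d-simplices in ℝ^d, let ℬ be the free abelian group on S, and let π : ℬ → (signed measures on ℝ^d) be the group homomorphism sending the generator corresponding to a simplex Δ to its characteristic measure [Δ]. Then the kernel of π is generated, as a subgroup, by the elements (Δ) − (Δ_1) − (Δ_2) ranging over all triples of non-codegenerate d-simplices such that Δ = Δ_1 ∪ Δ_2 and Δ_1, Δ_2 have disjoint interiors. -/
open MeasureTheory

noncomputable section

/-- The type of non-codegenerate `d`-simplices in `ℝ^d`, regarded as subsets of `ℝ^d`. -/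
def NCSimplex (d : ℕ) : Type :=
  {P : Set (EuclideanSpace ℝ (Fin d)) //
    ∃ v : Fin (d + 1) → EuclideanSpace ℝ (Fin d),
      AffineIndependent ℝ v ∧
      (∀ k : Fin (d + 1),
        LinearIndependent ℝ (fun j : {j : Fin (d + 1) // j ≠ k} => v j.1)) ∧
      P = convexHull ℝ (Set.range v)}

/-- The characteristic measure `[Δ]` of a simplex, i.e. the restriction of Lebesgue measure
to `Δ`, regarded as a real-valued function on measurable sets. -/
def simplexMeasure {d : ℕ} (Δ : NCSimplex d) :
    {s : Set (EuclideanSpace ℝ (Fin d)) // MeasurableSet s} → ℝ :=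
  fun s => (volume (Δ.1 ∩ s.1)).toReal

/-- The sign of a real number as an integer. -/
def sg (r : ℝ) : ℤ := ((SignType.sign r : SignType) : ℤ)

lemma sg_mul (a b : ℝ) : sg (a * b) = sg a * sg b := by
  simp [sg, sign_mul]

lemma sg_pos {a : ℝ} (h : 0 < a) : sg a = 1 := by simp [sg, sign_pos h]
lemma sg_neg {a : ℝ} (h : a < 0) : sg a = -1 := by simp [sg, sign_neg h]
lemma sg_zero : sg 0 = 0 := by simp [sg]
lemma sg_mul_self {a : ℝ} (h : a ≠ 0) : sg a * sg a = 1 := by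
  rw [← sg_mul]; exact sg_pos (mul_self_pos.2 h)
lemma sg_neg' (a : ℝ) : sg (-a) = - sg a := by
  rw [neg_eq_neg_one_mul, sg_mul, sg_neg (by norm_num)]; ring
lemma sg_neg_one_pow (k : ℕ) : sg ((-1) ^ k) = (-1) ^ k := by
  induction k with
  | zero => simp [sg_pos]
  | succ k ih => rw [pow_succ, sg_mul, ih, pow_succ, sg_neg (by norm_num)]

section cocycle
variable {V : Type} [AddCommGroup V] [Module ℝ V] {A : Type} [AddCommGroup A]

/-- The signed value attached to a tuple. -/
def val {n : ℕ} (ω : V [⋀^Fin n]→ₗ[ℝ] ℝ) (e : Set V → A) (v : Fin n → V) : A :=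
  sg (ω v) • e (Set.range v)

/-- No facet subspace of the tuple meets `X`. -/
def GoodT {n : ℕ} (X : Set V) (v : Fin n → V) : Prop :=
  ∀ m, ∀ x ∈ X, x ∉ Submodule.span ℝ (v '' {m}ᶜ)

/-- Additivity under elementary dissections. -/
def Elem {n : ℕ} (ω : V [⋀^Fin n]→ₗ[ℝ] ℝ) (l : V →ₗ[ℝ] ℝ) (X : Set V) (e : Set V → A) : Prop :=
  ∀ (v : Fin n → V) (i j : Fin n) (t : ℝ), ω v ≠ 0 → (∀ k, l (v k) = 1) → i ≠ j → 0 < t → t < 1 →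
    GoodT X v → GoodT X (Function.update v i ((1 - t) • v i + t • v j)) →
    GoodT X (Function.update v j ((1 - t) • v i + t • v j)) →
    e (Set.range v) = e (Set.range (Function.update v i ((1 - t) • v i + t • v j))) +
      e (Set.range (Function.update v j ((1 - t) • v i + t • v j)))

lemma omega_update_left {n : ℕ} (ω : V [⋀^Fin n]→ₗ[ℝ] ℝ) (v : Fin n → V) (i j : Fin n) (hij : i ≠ j)
    (a b : ℝ) : ω (Function.update v i (a • v i + b • v j)) = a * ω v := by
  rw [ω.map_update_add, ω.map_update_smul, ω.map_update_smul, Function.update_eq_self,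
    ω.map_update_self v hij]
  simp

lemma omega_update_right {n : ℕ} (ω : V [⋀^Fin n]→ₗ[ℝ] ℝ) (v : Fin n → V) (i j : Fin n) (hij : i ≠ j)
    (a b : ℝ) : ω (Function.update v j (a • v i + b • v j)) = b * ω v := by
  rw [add_comm, omega_update_left _ _ _ _ hij.symm]

lemma val_split {n : ℕ} {ω : V [⋀^Fin n]→ₗ[ℝ] ℝ} {l : V →ₗ[ℝ] ℝ} {X : Set V} {e : Set V → A}
    (he : Elem ω l X e) (v : Fin n → V) (i j : Fin n) (t : ℝ) (hl : ∀ k, l (v k) = 1)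
    (hij : i ≠ j) (h0 : 0 < t) (h1 : t < 1) (g0 : GoodT X v)
    (g1 : GoodT X (Function.update v i ((1 - t) • v i + t • v j)))
    (g2 : GoodT X (Function.update v j ((1 - t) • v i + t • v j))) :
    val ω e v = val ω e (Function.update v i ((1 - t) • v i + t • v j)) +
      val ω e (Function.update v j ((1 - t) • v i + t • v j)) := by
  unfold val
  rw [omega_update_left _ _ _ _ hij, omega_update_right _ _ _ _ hij, sg_mul, sg_mul,
    sg_pos h0, sg_pos (show 0 < 1 - t by linarith), one_mul, ← smul_add]
  by_cases hv : ω v = 0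
  · simp [hv, sg_zero]
  · rw [he v i j t hv hl hij h0 h1 g0 g1 g2]

lemma val_eq_zero {n : ℕ} {ω : V [⋀^Fin n]→ₗ[ℝ] ℝ} {e : Set V → A} {v : Fin n → V}
    (h : ω v = 0) : val ω e v = 0 := by simp [val, h, sg_zero]

lemma goodT_removeNth {n : ℕ} {X : Set V} {w : Fin (n+1) → V}
    (hG : ∀ k l, k ≠ l → ∀ x ∈ X, x ∉ Submodule.span ℝ (w '' {k, l}ᶜ)) (k : Fin (n+1)) :
    GoodT X (k.removeNth w) := by
  intro m x hx h
  refine hG k (k.succAbove m) (Fin.succAbove_ne k m).symm x hx ?_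
  refine Submodule.span_mono ?_ h
  rintro _ ⟨a, ha, rfl⟩
  refine ⟨k.succAbove a, ?_, rfl⟩
  simp only [Set.mem_compl_iff, Set.mem_insert_iff, Set.mem_singleton_iff, not_or] at ha ⊢
  exact ⟨Fin.succAbove_ne k a, fun h => ha (Fin.succAbove_right_injective h)⟩

lemma range_removeNth {n : ℕ} (w : Fin (n+1) → V) (k : Fin (n+1)) :
    Set.range (k.removeNth w) = w '' {k}ᶜ := by
  ext z; constructor
  · rintro ⟨a, rfl⟩; exact ⟨_, Fin.succAbove_ne k a, rfl⟩
  · rintro ⟨a, ha, rfl⟩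
    obtain ⟨b, rfl⟩ := Fin.exists_succAbove_eq ha
    exact ⟨b, rfl⟩

/-- A tuple with an entry in the span of the others has zero volume. -/
lemma omega_eq_zero_of_mem_span {n : ℕ} (ω : V [⋀^Fin n]→ₗ[ℝ] ℝ) (v : Fin n → V) (i : Fin n)
    (h : v i ∈ Submodule.span ℝ (v '' {i}ᶜ)) : ω v = 0 := by
  apply ω.map_linearDependent
  intro hli
  exact hli.notMem_span_image (s := {i}ᶜ) (x := i) (by simp) h

lemma cocycle {n : ℕ} {ω : V [⋀^Fin n]→ₗ[ℝ] ℝ} {l : V →ₗ[ℝ] ℝ} {X : Set V} {e : Set V → A}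
    (he : Elem ω l X e) (N : ℕ) : ∀ (w : Fin (n+1) → V) (c : Fin (n+1) → ℝ),
    (∀ k, l (w k) = 1) →
    (∀ k l, k ≠ l → ∀ x ∈ X, x ∉ Submodule.span ℝ (w '' {k, l}ᶜ)) →
    c ≠ 0 → ∑ k, c k • w k = 0 → (Finset.univ.filter (fun k => c k ≠ 0)).card ≤ N →
    ∑ k : Fin (n+1), (-1 : ℤ) ^ (k : ℕ) • val ω e (k.removeNth w) = 0 := by
  induction N with
  | zero =>
    intro w c _ _ hc _ hN
    exfalso; apply hc
    simp only [nonpos_iff_eq_zero, Finset.card_eq_zero, Finset.filter_eq_empty_iff] at hN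
    funext k; simpa using hN (Finset.mem_univ k)
  | succ N ih =>
    intro w c hl hG hc hw hN
    have hsum : ∑ k, c k = 0 := by
      have := congrArg l hw
      simpa [map_sum, hl] using this
    by_cases hex : ∃ i j, i ≠ j ∧ 0 < c i * c j
    · obtain ⟨i, j, hij, hcij⟩ := hex
      have hs : c i + c j ≠ 0 := by
        intro h
        have : c j = - c i := by linarith
        rw [this] at hcij; nlinarith [sq_nonneg (c i)]
      have hi : c i ≠ 0 := by rintro h; simp [h] at hcij
      have hj : c j ≠ 0 := by rintro h; simp [h] at hcij
      set t := c j / (c i + c j) with ht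
      have h1t : 1 - t = c i / (c i + c j) := by rw [ht]; field_simp; ring
      have ht0 : 0 < t := by
        have : t = (c i * c j) * (1 + (c j / c i)) / (c i + c j)^2 := by rw [ht]; field_simp
        rw [this]
        have : 0 < c j / c i := by
          have : c j / c i = c i * c j / (c i)^2 := by field_simp
          rw [this]; positivity
        positivity
      have ht1 : 0 < 1 - t := by
        have : 1 - t = (c i * c j) * (1 + (c i / c j)) / (c i + c j)^2 := by
          rw [h1t]; field_simp; ring
        rw [this]
        have : 0 < c i / c j := by
          have : c i / c j = c i * c j / (c j)^2 := by field_simp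
          rw [this]; positivity
        positivity
      set q := (1 - t) • w i + t • w j with hq
      have hlq : l q = 1 := by simp [hq, hl]
      have hqs : (c i + c j) • q = c i • w i + c j • w j := by
        rw [hq, h1t, ht, smul_add, smul_smul, smul_smul]
        congr 2 <;> field_simp
      have hwij : c i • w i + c j • w j + ∑ k ∈ {i, j}ᶜ, c k • w k = 0 := by
        rw [← hw, ← Finset.sum_add_sum_compl {i, j}, Finset.sum_pair hij]
      have hqspan : q ∈ Submodule.span ℝ (w '' {i, j}ᶜ) := by
        have : q = (c i + c j)⁻¹ • (-∑ k ∈ {i, j}ᶜ, c k • w k) := by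
          rw [eq_inv_smul_iff₀ hs, hqs]
          exact eq_neg_of_add_eq_zero_left hwij
        rw [this]
        refine Submodule.smul_mem _ _ (Submodule.neg_mem _ (Submodule.sum_mem _ fun k hk => ?_))
        refine Submodule.smul_mem _ _ (Submodule.subset_span ⟨k, by simpa using hk, rfl⟩)
      have key : ∀ i j : Fin (n+1), i ≠ j → c i ≠ 0 → c j ≠ 0 → c i + c j ≠ 0 →
          (c i + c j) • q = c i • w i + c j • w j →
          (∀ S : Set (Fin (n+1)), i ∈ S → j ∈ S → q ∈ Submodule.span ℝ (w '' S)) →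
          q ∈ Submodule.span ℝ (w '' {i, j}ᶜ) →
          (∀ k l, k ≠ l → ∀ x ∈ X, x ∉ Submodule.span ℝ (Function.update w i q '' {k, l}ᶜ)) ∧
          ∑ k : Fin (n+1), (-1 : ℤ) ^ (k : ℕ) • val ω e (k.removeNth (Function.update w i q)) = 0 := by
        intro i j hij hi hj hs hqs hqS hqspan
        have hG' : ∀ k l, k ≠ l → ∀ x ∈ X,
            x ∉ Submodule.span ℝ (Function.update w i q '' {k, l}ᶜ) := by
          intro k m hkm x hx h
          by_cases hi' : i ∈ ({k, m} : Set (Fin (n+1)))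
          · refine hG k m hkm x hx ?_
            rwa [Set.image_congr (g := w)] at h
            intro a ha
            rw [Function.update_of_ne]
            rintro rfl; exact ha hi'
          by_cases hj' : j ∈ ({k, m} : Set (Fin (n+1)))
          · refine hG i j hij x hx ?_
            refine Submodule.span_le.2 ?_ h
            rintro _ ⟨a, ha, rfl⟩
            by_cases hai : a = i
            · subst hai; rw [Function.update_self]; exact hqspan
            · rw [Function.update_of_ne hai]
              refine Submodule.subset_span ⟨a, ?_, rfl⟩
              rintro (rfl | rfl)
              · exact hai rfl
              · exact ha hj'
          · refine hG k m hkm x hx ?_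
            refine Submodule.span_le.2 ?_ h
            rintro _ ⟨a, ha, rfl⟩
            by_cases hai : a = i
            · subst hai; rw [Function.update_self]; exact hqS _ hi' hj'
            · rw [Function.update_of_ne hai]
              exact Submodule.subset_span ⟨a, ha, rfl⟩
        refine ⟨hG', ih (Function.update w i q)
          (Function.update (Function.update c j 0) i (c i + c j)) ?_ hG' ?_ ?_ ?_⟩
        · intro k; by_cases hk : k = i
          · subst hk; simp [hlq]
          · simp [hk, hl]
        · intro h; have := congrFun h i; simp at this; exact hs this
        · rw [← Finset.sum_add_sum_compl {i, j}, Finset.sum_pair hij]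
          rw [← hw, ← Finset.sum_add_sum_compl {i, j} (fun k => c k • w k), Finset.sum_pair hij]
          congr 1
          · simp [hij.symm, hqs]
          · refine Finset.sum_congr rfl fun k hk => ?_
            simp only [Finset.mem_compl, Finset.mem_insert, Finset.mem_singleton, not_or] at hk
            simp [hk.1, hk.2]
        · refine Nat.le_of_lt_succ (lt_of_lt_of_le (Finset.card_lt_card ?_) hN)
          refine ⟨?_, fun h => ?_⟩
          · intro k hk
            simp only [Finset.mem_filter, Finset.mem_univ, true_and] at hk ⊢
            by_cases hki : k = i
            · rw [hki]; exact hi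
            · by_cases hkj : k = j
              · rw [hkj]; exact hj
              · simpa [hki, hkj] using hk
          · have := h (show j ∈ _ by simp [hj])
            simp [hij.symm] at this
      have hqS : ∀ S : Set (Fin (n+1)), i ∈ S → j ∈ S → q ∈ Submodule.span ℝ (w '' S) := by
        intro S hiS hjS
        exact Submodule.add_mem _ (Submodule.smul_mem _ _ (Submodule.subset_span ⟨i, hiS, rfl⟩))
          (Submodule.smul_mem _ _ (Submodule.subset_span ⟨j, hjS, rfl⟩))
      obtain ⟨G1, z1⟩ := key i j hij hi hj hs hqs hqS hqspan
      obtain ⟨G2, z2⟩ := key j i hij.symm hj hi (by rwa [add_comm]) (by rw [add_comm, hqs, add_comm])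
        (fun S a b => hqS S b a) (by rwa [Set.pair_comm])
      rw [← add_zero (0 : A)]
      nth_rw 1 [← z1]
      rw [← z2, ← Finset.sum_add_distrib]
      refine Finset.sum_congr rfl fun k _ => ?_
      rw [← smul_add]
      congr 1
      by_cases hki : k = i
      · subst hki
        rw [Fin.removeNth_update, left_eq_add]
        apply val_eq_zero
        obtain ⟨j', rfl⟩ := Fin.exists_succAbove_eq hij.symm
        rw [Fin.removeNth_update_succAbove]
        refine omega_eq_zero_of_mem_span _ _ j' ?_
        rw [Function.update_self]
        refine Submodule.span_mono ?_ hqspan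
        rintro _ ⟨a, ha, rfl⟩
        simp only [Set.mem_compl_iff, Set.mem_insert_iff, Set.mem_singleton_iff, not_or] at ha
        obtain ⟨a', rfl⟩ := Fin.exists_succAbove_eq ha.1
        have : a' ≠ j' := fun h => ha.2 (by rw [h])
        exact ⟨a', this, by rw [Function.update_of_ne this]; rfl⟩
      by_cases hkj : k = j
      · subst hkj
        rw [Fin.removeNth_update, right_eq_add]
        apply val_eq_zero
        obtain ⟨j', rfl⟩ := Fin.exists_succAbove_eq hij
        rw [Fin.removeNth_update_succAbove]
        refine omega_eq_zero_of_mem_span _ _ j' ?_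
        rw [Function.update_self]
        refine Submodule.span_mono ?_ hqspan
        rintro _ ⟨a, ha, rfl⟩
        simp only [Set.mem_compl_iff, Set.mem_insert_iff, Set.mem_singleton_iff, not_or] at ha
        obtain ⟨a', rfl⟩ := Fin.exists_succAbove_eq ha.2
        have : a' ≠ j' := fun h => ha.1 (by rw [h])
        exact ⟨a', this, by rw [Function.update_of_ne this]; rfl⟩
      obtain ⟨i', rfl⟩ := Fin.exists_succAbove_eq (Ne.symm hki)
      obtain ⟨j', rfl⟩ := Fin.exists_succAbove_eq (Ne.symm hkj)
      have g1 := goodT_removeNth G1 k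
      have g2 := goodT_removeNth G2 k
      rw [Fin.removeNth_update_succAbove] at g1 g2 ⊢
      rw [Fin.removeNth_update_succAbove]
      exact val_split he (k.removeNth w) i' j' t (fun _ => hl _)
        (fun h => hij (by rw [h])) ht0 (by linarith) (goodT_removeNth hG k) g1 g2
    · push Not at hex
      have hp : ∃ i, 0 < c i := by
        by_contra hcon
        push Not at hcon
        apply hc; funext k
        exact (Finset.sum_eq_zero_iff_of_nonpos (fun k _ => hcon k)).1 hsum k (Finset.mem_univ k)
      have hn : ∃ j, c j < 0 := by
        by_contra hcon
        push Not at hcon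
        apply hc; funext k
        exact (Finset.sum_eq_zero_iff_of_nonneg (fun k _ => hcon k)).1 hsum k (Finset.mem_univ k)
      obtain ⟨i, hi⟩ := hp
      obtain ⟨j, hj⟩ := hn
      have hij : i ≠ j := by rintro rfl; linarith
      have hz : ∀ k, k ≠ i → k ≠ j → c k = 0 := by
        intro k hki hkj
        have a := hex i k (Ne.symm hki)
        have b := hex j k (Ne.symm hkj)
        rcases lt_trichotomy (c k) 0 with h | h | h
        · nlinarith [mul_pos_of_neg_of_neg hj h]
        · exact h
        · nlinarith [mul_pos hi h]
      have hcc : c j = - c i := by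
        rw [Fintype.sum_eq_add i j hij (fun k hk => hz k hk.1 hk.2)] at hsum; linarith
      have hwij : w i = w j := by
        rw [Fintype.sum_eq_add i j hij (fun k hk => by rw [hz k hk.1 hk.2, zero_smul]), hcc,
          neg_smul, ← sub_eq_add_neg, ← smul_sub] at hw
        exact sub_eq_zero.1 ((smul_eq_zero.1 hw).resolve_left hi.ne')
      rw [Fintype.sum_eq_add i j hij]
      · have h := ω.neg_one_pow_smul_map_removeNth_add_eq_zero_of_eq hwij hij
        have hr : Set.range (i.removeNth w) = Set.range (j.removeNth w) := by
          have aux : ∀ i j : Fin (n+1), i ≠ j → w i = w j →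
              Set.range (i.removeNth w) ⊆ Set.range (j.removeNth w) := by
            intro i j hij h
            rw [range_removeNth, range_removeNth]
            rintro _ ⟨a, ha, rfl⟩
            by_cases haj : a = j
            · exact ⟨i, hij, by rw [haj, h]⟩
            · exact ⟨a, haj, rfl⟩
          exact (aux i j hij hwij).antisymm (aux j i hij.symm hwij.symm)
        unfold val
        rw [hr, smul_smul, smul_smul, ← add_smul]
        have hsg : (-1 : ℤ) ^ (i : ℕ) * sg (ω (i.removeNth w)) =
            - ((-1 : ℤ) ^ (j : ℕ) * sg (ω (j.removeNth w))) := by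
          rw [← sg_neg_one_pow, ← sg_neg_one_pow, ← sg_mul, ← sg_mul, ← sg_neg']
          congr 1
          have h' := eq_neg_of_add_eq_zero_left h
          simpa [Units.smul_def] using h'
        rw [hsg]; simp
      · rintro k ⟨hki, hkj⟩
        rw [val_eq_zero, smul_zero]
        obtain ⟨i', rfl⟩ := Fin.exists_succAbove_eq (Ne.symm hki)
        obtain ⟨j', rfl⟩ := Fin.exists_succAbove_eq (Ne.symm hkj)
        exact ω.map_eq_zero_of_eq _ (i := i') (j := j') hwij (fun h => hij (by rw [h]))
end cocycle

section generic
open Filter Topology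
variable {V : Type} [AddCommGroup V] [Module ℝ V]

/-- The filter of generic vectors. -/
def gen (V : Type) [AddCommGroup V] [Module ℝ V] : Filter V :=
  ⨅ φ : {φ : V →ₗ[ℝ] ℝ // φ ≠ 0}, 𝓟 {x | φ.1 x ≠ 0}

lemma gen_ne {φ : V →ₗ[ℝ] ℝ} (h : φ ≠ 0) : ∀ᶠ x in gen V, φ x ≠ 0 :=
  (iInf_le (fun φ : {φ : V →ₗ[ℝ] ℝ // φ ≠ 0} => 𝓟 {x | φ.1 x ≠ 0}) ⟨φ, h⟩) (mem_principal_self _)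

lemma gen_notMem {W : Submodule ℝ V} (h : W ≠ ⊤) : ∀ᶠ x in gen V, x ∉ W := by
  obtain ⟨φ, h0, hφ⟩ := W.exists_le_ker_of_lt_top h.lt_top
  filter_upwards [gen_ne h0] with x hx hxW
  exact hx (hφ hxW)

instance gen_neBot : (gen V).NeBot := by
  classical
  unfold gen
  rw [(hasBasis_iInf_principal_finite _).neBot_iff]
  intro t ht
  lift t to Finset {φ : V →ₗ[ℝ] ℝ // φ ≠ 0} using ht
  have := Subspace.biUnion_ne_univ_of_top_notMem (k := ℝ) (E := V)
    (s := t.image (fun φ => LinearMap.ker φ.1)) (by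
      simp only [Finset.mem_image, not_exists, not_and]
      rintro φ _ h
      exact φ.2 (LinearMap.ker_eq_top.1 h))
  obtain ⟨x, hx⟩ := (Set.ne_univ_iff_exists_notMem _).1 this
  refine ⟨x, ?_⟩
  simp only [Set.mem_iInter, Set.mem_ofPred_eq]
  intro φ hφ h
  apply hx
  simp only [Set.mem_iUnion]
  exact ⟨_, Finset.mem_image_of_mem _ hφ, h⟩

/-- Signed indicator of the open cone spanned by a tuple. -/
def ind {n : ℕ} (ω : V [⋀^Fin n]→ₗ[ℝ] ℝ) (v : Fin n → V) (x : V) : ℤ :=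
  open Classical in if ∀ i, 0 < ω (Function.update v i x) * ω v then sg (ω v) else 0

/-- The facet functional. -/
def cf {n : ℕ} (ω : V [⋀^Fin n]→ₗ[ℝ] ℝ) (v : Fin n → V) (i : Fin n) : V →ₗ[ℝ] ℝ :=
  ω.toMultilinearMap.toLinearMap v i

lemma cf_apply {n : ℕ} (ω : V [⋀^Fin n]→ₗ[ℝ] ℝ) (v : Fin n → V) (i : Fin n) (x : V) :
    cf ω v i x = ω (Function.update v i x) := rfl

lemma cf_self {n : ℕ} (ω : V [⋀^Fin n]→ₗ[ℝ] ℝ) (v : Fin n → V) (i : Fin n) :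
    cf ω v i (v i) = ω v := by simp [cf_apply]

lemma cf_ne {n : ℕ} (ω : V [⋀^Fin n]→ₗ[ℝ] ℝ) (v : Fin n → V) {i k : Fin n} (h : i ≠ k) :
    cf ω v i (v k) = 0 := by rw [cf_apply, ω.map_update_self v h]

lemma linInd_of_ne {n : ℕ} {ω : V [⋀^Fin n]→ₗ[ℝ] ℝ} {v : Fin n → V} (h : ω v ≠ 0) :
    LinearIndependent ℝ v := by
  by_contra hc; exact h (ω.map_linearDependent v hc)

lemma span_of_ne {n : ℕ} {ω : V [⋀^Fin n]→ₗ[ℝ] ℝ} {v : Fin n → V} [FiniteDimensional ℝ V]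
    (hn : Module.finrank ℝ V = n) (h : ω v ≠ 0) : Submodule.span ℝ (Set.range v) = ⊤ :=
  (linInd_of_ne h).span_eq_top_of_card_eq_finrank' (by simp [hn])

lemma cf_expand {n : ℕ} {ω : V [⋀^Fin n]→ₗ[ℝ] ℝ} {v : Fin n → V}
    (hs : Submodule.span ℝ (Set.range v) = ⊤) (x : V) : ω v • x = ∑ i, cf ω v i x • v i := by
  have : x ∈ Submodule.span ℝ (Set.range v) := by rw [hs]; trivial
  obtain ⟨c, rfl⟩ := (Submodule.mem_span_range_iff_exists_fun ℝ).1 this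
  rw [Finset.smul_sum]
  refine Finset.sum_congr rfl fun i _ => ?_
  rw [map_sum, Finset.sum_eq_single i]
  · rw [map_smul, cf_self, smul_smul, smul_eq_mul, mul_comm]
  · intro k _ hk; rw [map_smul, cf_ne _ _ hk.symm, smul_zero]
  · simp

lemma ker_cf_le {n : ℕ} {ω : V [⋀^Fin n]→ₗ[ℝ] ℝ} {v : Fin n → V}
    (hs : Submodule.span ℝ (Set.range v) = ⊤) (h : ω v ≠ 0) (i : Fin n) :
    LinearMap.ker (cf ω v i) ≤ Submodule.span ℝ (v '' {i}ᶜ) := by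
  intro x hx
  have h1 : x = (ω v)⁻¹ • ∑ i, cf ω v i x • v i := by rw [← cf_expand hs, inv_smul_smul₀ h]
  rw [h1]
  refine Submodule.smul_mem _ _ (Submodule.sum_mem _ fun k _ => ?_)
  by_cases hk : k = i
  · subst hk; rw [LinearMap.mem_ker.1 hx, zero_smul]; exact Submodule.zero_mem _
  · exact Submodule.smul_mem _ _ (Submodule.subset_span ⟨k, hk, rfl⟩)

/-- The induced volume form on the hyperplane `ker h`. -/
def omH {n : ℕ} (ω : V [⋀^Fin (n+1)]→ₗ[ℝ] ℝ) (h : V →ₗ[ℝ] ℝ) (y : V) :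
    (LinearMap.ker h) [⋀^Fin n]→ₗ[ℝ] ℝ :=
  (ω.curryLeft y).compLinearMap (LinearMap.ker h).subtype

/-- The projection onto `ker h` along `y`. -/
def prH (h : V →ₗ[ℝ] ℝ) (y : V) (hy : h y = 1) : V →ₗ[ℝ] LinearMap.ker h :=
  LinearMap.codRestrict _ (LinearMap.id - h.smulRight y) (by intro c; simp [hy])

lemma prH_coe (h : V →ₗ[ℝ] ℝ) (y : V) (hy : h y = 1) {z : V} (hz : h z = 0) :
    (prH h y hy z : V) = z := by
  change z - h z • y = z
  simp [hz]

lemma omH_apply {n : ℕ} (ω : V [⋀^Fin (n+1)]→ₗ[ℝ] ℝ) (h : V →ₗ[ℝ] ℝ) (y : V)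
    (F : Fin n → LinearMap.ker h) :
    omH ω h y F = ω (Fin.cons y (fun k => (F k : V))) := rfl

lemma cons_removeNth {n : ℕ} (ω : V [⋀^Fin (n+1)]→ₗ[ℝ] ℝ) (v : Fin (n+1) → V) (i : Fin (n+1))
    (y : V) : ω (Fin.cons y (i.removeNth v)) = (-1) ^ (i : ℕ) * ω (Function.update v i y) := by
  have := ω.neg_one_pow_smul_map_insertNth i y (i.removeNth v)
  rw [Fin.insertNth_removeNth] at this
  rw [show (Fin.cons y (i.removeNth v) : Fin (n+1) → V) = Matrix.vecCons y (i.removeNth v) from rfl,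
    ← this]
  rcases neg_one_pow_eq_or ℤ (i : ℕ) with h | h <;>
  rcases Nat.even_or_odd (i : ℕ) with h' | h' <;> simp [h'.neg_one_pow]

lemma plucker {n : ℕ} {ω : V [⋀^Fin n]→ₗ[ℝ] ℝ} {v : Fin n → V}
    (hs : Submodule.span ℝ (Set.range v) = ⊤) {i m : Fin n} (him : i ≠ m) {x : V}
    (hx : cf ω v i x = 0) (y : V) :
    ω v * ω (Function.update (Function.update v m x) i y) = cf ω v m x * cf ω v i y := by
  have : (ω v) • cf ω (Function.update v m x) i = (cf ω v m x) • cf ω v i := by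
    refine LinearMap.ext_on_range hs fun k => ?_
    simp only [LinearMap.smul_apply, smul_eq_mul]
    by_cases hki : k = i
    · subst hki
      rw [cf_self]
      have : v k = (Function.update v m x) k := by rw [Function.update_of_ne him]
      rw [this, cf_self, cf_apply, mul_comm]
    · rw [cf_ne ω v (Ne.symm hki)]
      by_cases hkm : k = m
      · subst hkm
        have h1 : Function.update (Function.update v k x) i (v k) =
            (Function.update v i x) ∘ Equiv.swap i k := by
          funext a
          by_cases ha : a = i
          · subst ha; simp [Function.update_of_ne hki]
          · by_cases hb : a = k
            · subst hb; simp [Function.update_of_ne ha]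
            · simp [Equiv.swap_apply_of_ne_of_ne ha hb, ha, hb]
        rw [cf_apply, h1, ω.map_swap _ him, ← cf_apply, hx]; simp
      · have : v k = (Function.update v m x) k := by rw [Function.update_of_ne hkm]
        rw [this, cf_ne _ _ (Ne.symm hki)]; simp
  have := LinearMap.congr_fun this y
  simpa [cf_apply] using this

lemma ev_sign {a : ℝ} (ha : a ≠ 0) (b : ℝ) :
    ∀ᶠ ε in 𝓝[>] (0:ℝ), (0 < a + ε * b ↔ 0 < a) := by
  apply Filter.Eventually.filter_mono nhdsWithin_le_nhds
  have hc : ContinuousAt (fun ε : ℝ => a + ε * b) 0 := by fun_prop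
  rcases lt_or_gt_of_ne ha with h | h
  · have : (fun ε : ℝ => a + ε * b) 0 < 0 := by simpa using h
    filter_upwards [hc.eventually_lt_const this] with ε hε
    constructor <;> intro <;> linarith
  · have : (fun ε : ℝ => a + ε * b) 0 > 0 := by simpa using h
    filter_upwards [hc.eventually_const_lt this] with ε hε
    constructor <;> intro <;> linarith

lemma ker_eq_of_vanish {h : V →ₗ[ℝ] ℝ} {y : V} (hy : h y = 1) {φ : V →ₗ[ℝ] ℝ} (hφ : φ ≠ 0)
    (hv : ∀ z, h z = 0 → φ z = 0) : φ y ≠ 0 ∧ LinearMap.ker φ = LinearMap.ker h := by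
  have hz : ∀ z, φ z = h z * φ y := by
    intro z
    have := hv (z - h z • y) (by simp [hy])
    simp at this; linarith
  have hne : φ y ≠ 0 := by
    intro h0; apply hφ; ext z; simp [hz z, h0]
  refine ⟨hne, ?_⟩
  ext z; simp [hz z, hne]

lemma gen_hyper {h : V →ₗ[ℝ] ℝ} {y : V} (hy : h y = 1) {p : V → Prop} (hp : ∀ᶠ z in gen V, p z)
    (s : ℝ) (hs : s ≠ 0) :
    ∀ᶠ x : LinearMap.ker h in gen (LinearMap.ker h), ∀ᶠ ε in 𝓝[>] (0:ℝ), p ((x : V) + (ε * s) • y) := by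
  have : (gen (LinearMap.ker h)).bind
      (fun x => Filter.map (fun ε : ℝ => (x : V) + (ε * s) • y) (𝓝[>] (0:ℝ))) ≤ gen V := by
    refine le_iInf fun φ => ?_
    rw [Filter.le_principal_iff, Filter.mem_bind']
    by_cases hφ : φ.1 ∘ₗ (LinearMap.ker h).subtype = 0
    · obtain ⟨hne, -⟩ := ker_eq_of_vanish hy φ.2
        (fun z hz => by simpa using LinearMap.congr_fun hφ ⟨z, hz⟩)
      refine Filter.Eventually.of_forall fun x => ?_
      change ∀ᶠ ε in 𝓝[>] (0:ℝ), φ.1 ((x : V) + (ε * s) • y) ≠ 0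
      filter_upwards [self_mem_nhdsWithin] with ε hε
      have h1 : φ.1 x = 0 := by simpa using LinearMap.congr_fun hφ x
      have h2 : ε ≠ 0 := ne_of_gt hε
      simp [h1, hs, hne, h2]
    · filter_upwards [gen_ne hφ] with x hx
      change ∀ᶠ ε in 𝓝[>] (0:ℝ), φ.1 ((x : V) + (ε * s) • y) ≠ 0
      have hx' : φ.1 x ≠ 0 := hx
      filter_upwards [ev_sign hx' (s * φ.1 y), ev_sign (neg_ne_zero.2 hx') (-(s * φ.1 y))]
        with ε h1 h2 h0
      rw [map_add, map_smul, smul_eq_mul, mul_assoc] at h0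
      rcases lt_or_gt_of_ne hx' with h | h
      · have := h2.2 (by linarith); linarith
      · have := h1.2 h; linarith
  exact this hp

lemma jump [FiniteDimensional ℝ V] {n : ℕ} (hn : Module.finrank ℝ V = n + 1)
    {ω : V [⋀^Fin (n+1)]→ₗ[ℝ] ℝ} {h : V →ₗ[ℝ] ℝ} {y : V} (hy : h y = 1)
    (v : Fin (n+1) → V) (hv : ω v ≠ 0) :
    ∀ᶠ x : LinearMap.ker h in gen (LinearMap.ker h), ∀ᶠ ε in 𝓝[>] (0:ℝ),
      ind ω v ((x : V) + (ε * 1) • y) - ind ω v ((x : V) + (ε * (-1)) • y) =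
      ∑ i : Fin (n+1), open Classical in if LinearMap.ker (cf ω v i) = LinearMap.ker h then
        (-1) ^ (i : ℕ) * ind (omH ω h y) (fun k => prH h y hy (i.removeNth v k)) x else 0 := by
  classical
  have hs := span_of_ne hn hv
  have hcf0 : ∀ i, cf ω v i ≠ 0 := fun i h0 => hv (by rw [← cf_self ω v i, h0]; rfl)
  have h1 : ∀ᶠ x : LinearMap.ker h in gen (LinearMap.ker h), ∀ i, LinearMap.ker (cf ω v i) = LinearMap.ker h ∨
      cf ω v i x ≠ 0 := by
    rw [Filter.eventually_all]
    intro i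
    by_cases hi : LinearMap.ker (cf ω v i) = LinearMap.ker h
    · exact Filter.Eventually.of_forall fun _ => Or.inl hi
    · have : cf ω v i ∘ₗ (LinearMap.ker h).subtype ≠ 0 := by
        intro h0
        exact hi (ker_eq_of_vanish hy (hcf0 i)
          (fun z hz => by simpa using LinearMap.congr_fun h0 ⟨z, hz⟩)).2
      filter_upwards [gen_ne this] with x hx
      exact Or.inr hx
  filter_upwards [h1] with x hx
  have h2 : ∀ᶠ ε in 𝓝[>] (0:ℝ), ∀ i, LinearMap.ker (cf ω v i) ≠ LinearMap.ker h →
      (0 < cf ω v i ((x : V) + (ε * 1) • y) * ω v ↔ 0 < cf ω v i x * ω v) ∧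
      (0 < cf ω v i ((x : V) + (ε * (-1)) • y) * ω v ↔ 0 < cf ω v i x * ω v) := by
    rw [Filter.eventually_all]
    intro i
    by_cases hi : LinearMap.ker (cf ω v i) = LinearMap.ker h
    · exact Filter.Eventually.of_forall fun _ h => absurd hi h
    · have hne := mul_ne_zero ((hx i).resolve_left hi) hv
      filter_upwards [ev_sign hne (cf ω v i y * ω v), ev_sign hne (-(cf ω v i y * ω v))]
        with ε e1 e2 _
      rw [← e1]
      constructor
      · rw [map_add, map_smul, smul_eq_mul]; ring_nf
      · rw [e1, ← e2, map_add, map_smul, smul_eq_mul]; ring_nf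
  filter_upwards [h2, self_mem_nhdsWithin] with ε hε hpos
  replace hpos : 0 < ε := hpos
  by_cases hex : ∃ i, LinearMap.ker (cf ω v i) = LinearMap.ker h
  · obtain ⟨i, hi⟩ := hex
    have huniq : ∀ k, k ≠ i → LinearMap.ker (cf ω v k) ≠ LinearMap.ker h := by
      intro k hk hk'
      have : v i ∈ LinearMap.ker (cf ω v k) := cf_ne ω v hk
      rw [hk', ← hi, LinearMap.mem_ker, cf_self] at this
      exact hv this
    rw [Finset.sum_eq_single i (fun k _ hk => if_neg (huniq k hk)) (by simp), if_pos hi]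
    have hxi : cf ω v i x = 0 := by
      have : (x : V) ∈ LinearMap.ker (cf ω v i) := by rw [hi]; exact x.2
      exact this
    have hyi : cf ω v i y ≠ 0 := by
      intro h0
      have : y ∈ LinearMap.ker (cf ω v i) := h0
      rw [hi, LinearMap.mem_ker, hy] at this
      exact one_ne_zero this
    have hF : ∀ k, ((prH h y hy (i.removeNth v k) : LinearMap.ker h) : V) = i.removeNth v k := by
      intro k
      apply prH_coe
      have : i.removeNth v k ∈ LinearMap.ker (cf ω v i) :=
        cf_ne ω v (Fin.succAbove_ne i k).symm
      rwa [hi] at this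
    have hom : omH ω h y (fun k => prH h y hy (i.removeNth v k)) =
        (-1) ^ (i : ℕ) * cf ω v i y := by
      rw [omH_apply, funext hF, cons_removeNth, cf_apply]
    have hcond : ∀ m : Fin n, (0 < omH ω h y (Function.update
          (fun k => prH h y hy (i.removeNth v k)) m x) *
          omH ω h y (fun k => prH h y hy (i.removeNth v k)) ↔
          0 < cf ω v (i.succAbove m) x * ω v) := by
      intro m
      have e1 : (fun k => ((Function.update (fun k => prH h y hy (i.removeNth v k)) m x k :
          LinearMap.ker h) : V)) = i.removeNth (Function.update v (i.succAbove m) x) := by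
        rw [Fin.removeNth_update_succAbove]
        funext k
        by_cases hk : k = m
        · subst hk; simp
        · simp [hk, hF]
      rw [hom, omH_apply, e1, cons_removeNth]
      have hpl := plucker hs (Fin.succAbove_ne i m).symm hxi y
      have e2 : ((-1) ^ (i:ℕ) * ω (Function.update (Function.update v (i.succAbove m) ↑x) i y) *
          ((-1) ^ (i:ℕ) * cf ω v i y)) * (ω v * ω v) =
          (cf ω v (i.succAbove m) x * ω v) * (cf ω v i y * cf ω v i y) := by
        have e3 : ((-1 : ℝ) ^ (i:ℕ)) * (-1) ^ (i:ℕ) = 1 := by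
          rw [← mul_pow]; simp
        linear_combination (ω v * cf ω v i y) * hpl +
          (ω v * ω v) * cf ω v i y * ω (Function.update (Function.update v (i.succAbove m) ↑x) i y) * e3
      have p1 : 0 < ω v * ω v := mul_self_pos.2 hv
      have p2 : 0 < cf ω v i y * cf ω v i y := mul_self_pos.2 hyi
      rw [← mul_pos_iff_of_pos_right p1, e2, mul_pos_iff_of_pos_right p2]
    have hcond' : (∀ m : Fin n, 0 < omH ω h y (Function.update
          (fun k => prH h y hy (i.removeNth v k)) m x) *
          omH ω h y (fun k => prH h y hy (i.removeNth v k))) ↔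
          ∀ m : Fin n, 0 < cf ω v (i.succAbove m) x * ω v := forall_congr' hcond
    have hp : (∀ k, 0 < ω (Function.update v k ((x : V) + (ε * 1) • y)) * ω v) ↔
        (0 < cf ω v i y * ω v ∧ ∀ m : Fin n, 0 < cf ω v (i.succAbove m) x * ω v) := by
      rw [Fin.forall_iff_succAbove i]
      refine and_congr ?_ (forall_congr' fun m => ?_)
      · rw [← cf_apply, map_add, hxi, map_smul, smul_eq_mul]
        rw [show (0 + ε * 1 * cf ω v i y) * ω v = ε * (cf ω v i y * ω v) by ring,
          mul_pos_iff_of_pos_left hpos]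
      · rw [← cf_apply]; exact (hε _ (huniq _ (Fin.succAbove_ne i m))).1
    have hm : (∀ k, 0 < ω (Function.update v k ((x : V) + (ε * (-1)) • y)) * ω v) ↔
        (cf ω v i y * ω v < 0 ∧ ∀ m : Fin n, 0 < cf ω v (i.succAbove m) x * ω v) := by
      rw [Fin.forall_iff_succAbove i]
      refine and_congr ?_ (forall_congr' fun m => ?_)
      · rw [← cf_apply, map_add, hxi, map_smul, smul_eq_mul]
        rw [show (0 + ε * (-1) * cf ω v i y) * ω v = ε * (-(cf ω v i y * ω v)) by ring,
          mul_pos_iff_of_pos_left hpos, neg_pos]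
      · rw [← cf_apply]; exact (hε _ (huniq _ (Fin.succAbove_ne i m))).2
    unfold ind
    rw [if_congr hp rfl rfl, if_congr hm rfl rfl, if_congr hcond' rfl rfl, hom, sg_mul,
      sg_neg_one_pow]
    by_cases hall : ∀ m : Fin n, 0 < cf ω v (i.succAbove m) x * ω v
    · simp only [hall, implies_true, and_true, if_true]
      rw [← mul_assoc, ← mul_pow]
      have hsg := sg_mul (cf ω v i y) (ω v)
      have hsq := sg_mul_self hv
      rcases lt_or_gt_of_ne (mul_ne_zero hyi hv) with hlt | hgt
      · rw [if_neg (not_lt.2 hlt.le), if_pos hlt]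
        rw [sg_neg hlt] at hsg
        norm_num
        linear_combination (sg (ω v)) * hsg + sg (cf ω v i y) * hsq
      · rw [if_pos hgt, if_neg (not_lt.2 hgt.le)]
        rw [sg_pos hgt] at hsg
        norm_num
        linear_combination (sg (ω v)) * hsg + sg (cf ω v i y) * hsq
    · rw [if_neg (fun h => hall h.2), if_neg (fun h => hall h.2), if_neg hall]; simp
  · push Not at hex
    rw [Finset.sum_eq_zero (fun i _ => if_neg (hex i)), sub_eq_zero]
    unfold ind
    refine if_congr (forall_congr' fun i => ?_) rfl rfl
    rw [← cf_apply, ← cf_apply, (hε i (hex i)).1, (hε i (hex i)).2]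
end generic

section main
open Filter Topology
variable {V : Type} [AddCommGroup V] [Module ℝ V] {A : Type} [AddCommGroup A]

lemma span_insert_ne_top [FiniteDimensional ℝ V] {a : ℕ} (v : Fin a → V) (S : Finset (Fin a)) (x : V)
    (h : S.card + 1 < Module.finrank ℝ V) :
    Submodule.span ℝ (insert x (v '' (S : Set (Fin a)))) ≠ ⊤ := by
  classical
  intro htop
  have h1 := finrank_span_finset_le_card (R := ℝ) (insert x (S.image v))
  rw [Finset.coe_insert, Finset.coe_image] at h1
  unfold Set.finrank at h1
  rw [htop, finrank_top] at h1
  have h2 := Finset.card_insert_le x (S.image v)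
  have h3 := Finset.card_image_le (s := S) (f := v)
  omega

/-- Normalisation to the slice `l = 1`. -/
def pt (l : V →ₗ[ℝ] ℝ) (u : V) : V := (l u)⁻¹ • u

lemma pt_mem {l : V →ₗ[ℝ] ℝ} {u : V} (h : l u ≠ 0) {W : Submodule ℝ V} (hp : pt l u ∈ W) : u ∈ W := by
  have := W.smul_mem (l u) hp
  rwa [pt, smul_inv_smul₀ h] at this

lemma l_pt {l : V →ₗ[ℝ] ℝ} {u : V} (h : l u ≠ 0) : l (pt l u) = 1 := by
  simp [pt, h]

lemma notMem_insert {l : V →ₗ[ℝ] ℝ} {u x : V} (h : l u ≠ 0) {T : Set V}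
    (hx : x ∉ Submodule.span ℝ T) (hu : u ∉ Submodule.span ℝ (insert x T)) :
    x ∉ Submodule.span ℝ (insert (pt l u) T) := by
  intro hc
  exact hu (pt_mem h (mem_span_insert_exchange hc hx))

lemma gen_pairs [FiniteDimensional ℝ V] {n : ℕ} (hn : Module.finrank ℝ V = n + 1)
    {l : V →ₗ[ℝ] ℝ} (hl : l ≠ 0) {X : Set V} (hX : X.Finite) (v : Fin (n+1) → V) (hv : GoodT X v) :
    ∀ᶠ u in gen V, ∀ k m : Fin (n+2), k ≠ m → ∀ x ∈ X,
      x ∉ Submodule.span ℝ ((Fin.cons (pt l u) v : Fin (n+2) → V) '' {k, m}ᶜ) := by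
  have h1 : ∀ᶠ u in gen V, ∀ x ∈ X, ∀ i m : Fin (n+1), i ≠ m →
      u ∉ Submodule.span ℝ (insert x (v '' {i, m}ᶜ)) := by
    rw [Filter.eventually_all_finite hX]
    intro x _
    simp only [Filter.eventually_all]
    intro i m him
    apply gen_notMem
    have := span_insert_ne_top v {i, m}ᶜ x (by
      rw [Finset.card_compl, Finset.card_pair him, Fintype.card_fin, hn]
      have := i.2; have := m.2; have : (i : ℕ) ≠ m := fun h => him (Fin.ext h)
      omega)
    rw [Finset.coe_compl, Finset.coe_pair] at this
    exact this
  filter_upwards [h1, gen_ne hl] with u hu hlu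
  have hz : ∀ m : Fin (n+1), ∀ x ∈ X, ∀ S : Set (Fin (n+2)), 0 ∉ S → m.succ ∉ S →
      x ∉ Submodule.span ℝ ((Fin.cons (pt l u) v : Fin (n+2) → V) '' S) := by
    intro m x hx S h0 hm hc
    refine hv m x hx (Submodule.span_mono ?_ hc)
    rintro _ ⟨a, ha, rfl⟩
    obtain ⟨b, rfl⟩ := Fin.exists_succ_eq.2 (fun h : a = 0 => h0 (h ▸ ha))
    refine ⟨b, fun h => hm (h ▸ ha), by simp⟩
  intro k m hkm x hx
  rcases Fin.eq_zero_or_eq_succ k with rfl | ⟨i, rfl⟩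
  · obtain ⟨b, rfl⟩ := Fin.exists_succ_eq.2 (Ne.symm hkm)
    exact hz b x hx _ (by simp) (by simp)
  rcases Fin.eq_zero_or_eq_succ m with rfl | ⟨j, rfl⟩
  · exact hz i x hx _ (by simp) (by simp)
  have hij : i ≠ j := fun h => hkm (by rw [h])
  intro hc
  refine notMem_insert (T := v '' {i, j}ᶜ) hlu ?_ (hu x hx i j hij) (Submodule.span_mono ?_ hc)
  · intro hc'
    refine hv i x hx (Submodule.span_mono (Set.image_mono ?_) hc')
    intro a ha h; exact ha (Or.inl h)
  · rintro _ ⟨a, ha, rfl⟩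
    rcases Fin.eq_zero_or_eq_succ a with rfl | ⟨b, rfl⟩
    · left; simp
    · right; refine ⟨b, ?_, by simp⟩
      simpa using ha

lemma gen_goodT [FiniteDimensional ℝ V] {n : ℕ} (hn : Module.finrank ℝ V = n + 1)
    {l : V →ₗ[ℝ] ℝ} (hl : l ≠ 0) {X : Set V} (hX : X.Finite) (F : Fin n → V) (W : Submodule ℝ V)
    (hF : ∀ k, F k ∈ W) (hW : ∀ x ∈ X, x ∉ W) :
    ∀ᶠ u in gen V, GoodT X (Fin.cons (pt l u) F : Fin (n+1) → V) := by
  have h1 : ∀ᶠ u in gen V, ∀ x ∈ X, ∀ k : Fin n,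
      u ∉ Submodule.span ℝ (insert x (F '' {k}ᶜ)) := by
    rw [Filter.eventually_all_finite hX]
    intro x _
    simp only [Filter.eventually_all]
    intro k
    apply gen_notMem
    have := span_insert_ne_top F {k}ᶜ x (by
      rw [Finset.card_compl, Finset.card_singleton, Fintype.card_fin, hn]
      have := k.2
      omega)
    simpa using this
  filter_upwards [h1, gen_ne hl] with u hu hlu
  intro m x hx hc
  rcases Fin.eq_zero_or_eq_succ m with rfl | ⟨k, rfl⟩
  · refine hW x hx (Submodule.span_le.2 ?_ hc)
    rintro _ ⟨a, ha, rfl⟩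
    obtain ⟨b, rfl⟩ := Fin.exists_succ_eq.2 (fun h : a = 0 => ha h)
    simpa using hF b
  · refine notMem_insert (T := F '' {k}ᶜ) hlu ?_ (hu x hx k) (Submodule.span_mono ?_ hc)
    · intro hc'
      refine hW x hx (Submodule.span_le.2 ?_ hc')
      rintro _ ⟨a, ha, rfl⟩
      exact hF a
    · rintro _ ⟨a, ha, rfl⟩
      rcases Fin.eq_zero_or_eq_succ a with rfl | ⟨b, rfl⟩
      · left; simp
      · right; refine ⟨b, ?_, by simp⟩
        simpa using ha

/-- The germ of the value of the cone over a facet from a generic apex. -/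
def cg {n : ℕ} (ω : V [⋀^Fin (n+1)]→ₗ[ℝ] ℝ) (l : V →ₗ[ℝ] ℝ) (e : Set V → A) (F : Fin n → V) :
    Germ (gen V) A :=
  Germ.coeAddHom (gen V) (fun u => val ω e (Fin.cons (pt l u) F : Fin (n+1) → V))

lemma removeNth_succ_cons {n : ℕ} (p : V) (v : Fin (n+1) → V) (i : Fin (n+1)) :
    (i.succ.removeNth (Fin.cons p v : Fin (n+2) → V) : Fin (n+1) → V) =
      (Fin.cons p (i.removeNth v : Fin n → V) : Fin (n+1) → V) := by
  funext k
  rcases Fin.eq_zero_or_eq_succ k with rfl | ⟨b, rfl⟩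
  · simp [Fin.removeNth]
  · simp [Fin.removeNth]

lemma cone_formula [FiniteDimensional ℝ V] {n : ℕ} (hn : Module.finrank ℝ V = n + 1)
    {ω : V [⋀^Fin (n+1)]→ₗ[ℝ] ℝ} {l : V →ₗ[ℝ] ℝ} (hl0 : l ≠ 0) {X : Set V} (hX : X.Finite)
    {e : Set V → A} (he : Elem ω l X e) (v : Fin (n+1) → V) (hl : ∀ k, l (v k) = 1)
    (hv : GoodT X v) :
    Germ.coeAddHom (gen V) (fun _ => val ω e v) =
      ∑ i : Fin (n+1), ((-1 : ℤ) ^ (i : ℕ)) • cg ω l e (i.removeNth v) := by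
  unfold cg
  simp only [← map_zsmul, ← map_sum]
  apply Germ.coe_eq.2
  filter_upwards [gen_pairs hn hl0 hX v hv, gen_ne hl0] with u hG hlu
  have hdep : ¬ LinearIndependent ℝ (Fin.cons (pt l u) v : Fin (n+2) → V) := by
    intro h
    have := h.fintype_card_le_finrank
    simp [hn] at this
  obtain ⟨c, hc, i, hi⟩ := Fintype.not_linearIndependent_iff.1 hdep
  have h := cocycle he _ (Fin.cons (pt l u) v : Fin (n+2) → V) c (by
    intro k
    rcases Fin.eq_zero_or_eq_succ k with rfl | ⟨b, rfl⟩
    · simp [l_pt hlu]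
    · simp [hl]) hG (fun h => hi (by rw [h]; rfl)) hc le_rfl
  rw [Fin.sum_univ_succ] at h
  simp only [removeNth_succ_cons, Fin.removeNth_zero, Fin.tail_cons, Fin.val_zero, pow_zero,
    one_smul, Fin.val_succ, pow_succ, mul_neg, mul_one, neg_smul, Finset.sum_neg_distrib] at h
  rw [add_neg_eq_zero] at h
  simp [h]

lemma omega_cons [FiniteDimensional ℝ V] {n : ℕ} (hn : Module.finrank ℝ V = n + 1)
    (ω : V [⋀^Fin (n+1)]→ₗ[ℝ] ℝ) {h : V →ₗ[ℝ] ℝ} {y : V} (hy : h y = 1) (p : V) (F : Fin n → V)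
    (hF : ∀ k, h (F k) = 0) :
    ω (Fin.cons p F : Fin (n+1) → V) = h p * ω (Fin.cons y F : Fin (n+1) → V) := by
  have h0 : ∀ z, h z = 0 → ω (Fin.cons z F : Fin (n+1) → V) = 0 := by
    intro z hz
    by_contra hc
    have htop := span_of_ne hn hc
    have : Submodule.span ℝ (Set.range (Fin.cons z F : Fin (n+1) → V)) ≤ LinearMap.ker h := by
      rw [Submodule.span_le]
      rintro _ ⟨a, rfl⟩
      rcases Fin.eq_zero_or_eq_succ a with rfl | ⟨b, rfl⟩
      · simpa using hz
      · simpa using hF b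
    rw [htop] at this
    have := this (show y ∈ ⊤ by trivial)
    rw [LinearMap.mem_ker, hy] at this
    exact one_ne_zero this
  have h1 := h0 (p - h p • y) (by simp [hy])
  have h2 : ∀ z, ω (Fin.cons z F : Fin (n+1) → V) = ω.curryLeft z F := fun z => rfl
  rw [h2] at h1 ⊢
  rw [h2]
  rw [map_sub, map_smul, AlternatingMap.sub_apply, AlternatingMap.smul_apply, smul_eq_mul] at h1
  linarith

/-- The valuation induced on a hyperplane. -/
def eH (l h : V →ₗ[ℝ] ℝ) (e : Set V → A) (T : Set (LinearMap.ker h)) : Germ (gen V) A :=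
  Germ.coeAddHom (gen V) (fun u => sg (h (pt l u)) • e (insert (pt l u) (Subtype.val '' T)))

lemma val_eH [FiniteDimensional ℝ V] {n : ℕ} (hn : Module.finrank ℝ V = n + 1)
    (ω : V [⋀^Fin (n+1)]→ₗ[ℝ] ℝ) (l : V →ₗ[ℝ] ℝ) {h : V →ₗ[ℝ] ℝ} {y : V} (hy : h y = 1)
    (e : Set V → A) (F : Fin n → LinearMap.ker h) :
    val (omH ω h y) (eH l h e) F = cg ω l e (fun k => (F k : V)) := by
  unfold val eH cg
  rw [← map_zsmul]
  congr 1
  funext u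
  simp only [Pi.smul_apply, val]
  rw [omega_cons hn ω hy (pt l u) _ (fun k => (F k).2), sg_mul, smul_smul, omH_apply,
    mul_comm (sg (h (pt l u)))]
  rw [Fin.range_cons, ← Set.range_comp]
  rfl

lemma elem_eH [FiniteDimensional ℝ V] {n : ℕ} (hn : Module.finrank ℝ V = n + 1)
    {ω : V [⋀^Fin (n+1)]→ₗ[ℝ] ℝ} {l : V →ₗ[ℝ] ℝ} (hl0 : l ≠ 0) {X : Set V} (hX : X.Finite)
    {e : Set V → A} (he : Elem ω l X e) {h : V →ₗ[ℝ] ℝ} {y : V} (hy : h y = 1)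
    (hXh : ∀ x ∈ X, x ∉ LinearMap.ker h) :
    Elem (omH ω h y) (l ∘ₗ (LinearMap.ker h).subtype) ∅ (eH l h e) := by
  intro F i j t hω hl hij t0 t1 _ _ _
  set q := (1 - t) • F i + t • F j with hq
  unfold eH
  rw [← map_add]
  apply Germ.coe_eq.2
  have h0 : h ≠ 0 := by rintro rfl; simp at hy
  have hrg : ∀ (p : V) (F : Fin n → LinearMap.ker h), insert p (Subtype.val '' Set.range F) =
      Set.range (Fin.cons p (fun k => (F k : V)) : Fin (n+1) → V) := by
    intro p F; rw [Fin.range_cons, ← Set.range_comp]; rfl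
  have hup : ∀ (p : V) (i : Fin n), (Fin.cons p (fun k => (Function.update F i q k : V)) : Fin (n+1) → V)
      = Function.update (Fin.cons p (fun k => (F k : V)) : Fin (n+1) → V) i.succ q := by
    intro p i
    rw [← Fin.cons_update]
    congr 1
    funext k
    by_cases hk : k = i
    · subst hk; simp
    · simp [hk]
  filter_upwards [gen_ne hl0, gen_ne h0,
    gen_goodT hn hl0 hX (fun k => (F k : V)) _ (fun k => (F k).2) hXh,
    gen_goodT hn hl0 hX (fun k => (Function.update F i q k : V)) _
      (fun k => (Function.update F i q k).2) hXh,
    gen_goodT hn hl0 hX (fun k => (Function.update F j q k : V)) _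
      (fun k => (Function.update F j q k).2) hXh] with u hlu hhu g0 g1 g2
  simp only [Pi.add_apply]
  rw [hrg, hrg, hrg, ← smul_add]
  rw [hup] at g1 g2 ⊢
  rw [hup]
  congr 1
  have hq' : (q : V) = (1 - t) • (Fin.cons (pt l u) (fun k => (F k : V)) : Fin (n+1) → V) i.succ
      + t • (Fin.cons (pt l u) (fun k => (F k : V)) : Fin (n+1) → V) j.succ := by
    simp [hq]
  rw [hq'] at g1 g2 ⊢
  refine he _ i.succ j.succ t ?_ ?_ ?_ t0 t1 g0 g1 g2
  · rw [omega_cons hn ω hy _ _ (fun k => (F k).2)]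
    refine mul_ne_zero ?_ hω
    intro hc
    have : pt l u ∈ LinearMap.ker h := hc
    exact hhu (pt_mem hlu this)
  · intro k
    rcases Fin.eq_zero_or_eq_succ k with rfl | ⟨b, rfl⟩
    · simp [l_pt hlu]
    · simpa using hl b
  · intro hc; exact hij (Fin.succ_injective _ hc)

theorem mainT (n : ℕ) : ∀ (V : Type) [AddCommGroup V] [Module ℝ V] [FiniteDimensional ℝ V]
    (_ : Module.finrank ℝ V = n) (ω : V [⋀^Fin n]→ₗ[ℝ] ℝ) (l : V →ₗ[ℝ] ℝ) (X : Set V)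
    (_ : X.Finite) (A : Type) [AddCommGroup A] (e : Set V → A) (_ : Elem ω l X e)
    (ι : Type) (s : Finset ι) (a : ι → ℤ) (v : ι → Fin n → V)
    (_ : ∀ j ∈ s, ω (v j) ≠ 0) (_ : ∀ j ∈ s, ∀ k, l (v j k) = 1) (_ : ∀ j ∈ s, GoodT X (v j))
    (_ : ∀ᶠ x in gen V, ∑ j ∈ s, a j * ind ω (v j) x = 0),
    ∑ j ∈ s, a j • val ω e (v j) = 0 := by
  induction n with
  | zero =>
    intro V _ _ _ hn ω l X hX A _ e he ι s a v hω hl hg hS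
    obtain ⟨x, hx⟩ := hS.exists
    have hv : ∀ j, v j = Fin.elim0 := fun j => Subsingleton.elim _ _
    simp only [hv, ind, IsEmpty.forall_iff, if_true] at hx
    simp only [hv, val, smul_smul, ← Finset.sum_smul]
    rw [hx, zero_smul]
  | succ n ih =>
    intro V _ _ _ hn ω l X hX A _ e he ι s a v hω hl hg hS
    classical
    rcases s.eq_empty_or_nonempty with rfl | ⟨j₀, hj₀⟩
    · simp
    have hl0 : l ≠ 0 := by
      rintro rfl
      have := hl j₀ hj₀ 0
      simp at this
    have hfib : ∀ H : Submodule ℝ V,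
        ∑ p ∈ (s ×ˢ (Finset.univ : Finset (Fin (n+1)))).filter
          (fun p => LinearMap.ker (cf ω (v p.1) p.2) = H),
          (a p.1 * (-1) ^ (p.2 : ℕ)) • cg ω l e (p.2.removeNth (v p.1)) = 0 := by
      intro H
      by_cases hne : ∃ j ∈ s, ∃ i, LinearMap.ker (cf ω (v j) i) = H
      swap
      · rw [Finset.filter_false_of_mem]
        · simp
        · intro p hp h
          exact hne ⟨p.1, (Finset.mem_product.1 hp).1, p.2, h⟩
      obtain ⟨j₁, hj₁, i₁, hH⟩ := hne
      set h : V →ₗ[ℝ] ℝ := (ω (v j₁))⁻¹ • cf ω (v j₁) i₁ with hh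
      set y := v j₁ i₁ with hyd
      have hy : h y = 1 := by
        rw [hh, LinearMap.smul_apply, hyd, cf_self, smul_eq_mul, inv_mul_cancel₀ (hω j₁ hj₁)]
      have hker : LinearMap.ker h = H := by
        rw [hh, LinearMap.ker_smul _ _ (inv_ne_zero (hω j₁ hj₁)), hH]
      have hXh : ∀ x ∈ X, x ∉ LinearMap.ker h := by
        intro x hx hc
        rw [hker, ← hH] at hc
        exact hg j₁ hj₁ i₁ x hx (ker_cf_le (span_of_ne hn (hω j₁ hj₁)) (hω j₁ hj₁) i₁ hc)
      have hdim : Module.finrank ℝ (LinearMap.ker h) = n := by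
        have h0 : h ≠ 0 := by intro h0; rw [h0] at hy; simp at hy
        have h1 := LinearMap.finrank_range_add_finrank_ker h
        have h2 : LinearMap.range h = ⊤ := by
          rw [LinearMap.range_eq_top]
          intro r; exact ⟨r • y, by simp [hy]⟩
        rw [h2, finrank_top, hn] at h1
        simp at h1; omega
      rw [← hker]
      have hmem : ∀ p ∈ (s ×ˢ (Finset.univ : Finset (Fin (n+1)))).filter
          (fun p => LinearMap.ker (cf ω (v p.1) p.2) = LinearMap.ker h),
          ∀ k, ((prH h y hy (p.2.removeNth (v p.1) k) : LinearMap.ker h) : V) =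
            p.2.removeNth (v p.1) k := by
        intro p hp k
        apply prH_coe
        have : p.2.removeNth (v p.1) k ∈ LinearMap.ker (cf ω (v p.1) p.2) :=
          cf_ne ω (v p.1) (Fin.succAbove_ne p.2 k).symm
        rwa [(Finset.mem_filter.1 hp).2] at this
      have key := ih (LinearMap.ker h) hdim (omH ω h y) (l ∘ₗ (LinearMap.ker h).subtype) ∅
        Set.finite_empty (Germ (gen V) A) (eH l h e) (elem_eH hn hl0 hX he hy hXh) (ι × Fin (n+1))
        ((s ×ˢ (Finset.univ : Finset (Fin (n+1)))).filter
          (fun p => LinearMap.ker (cf ω (v p.1) p.2) = LinearMap.ker h))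
        (fun p => a p.1 * (-1) ^ (p.2 : ℕ))
        (fun p k => prH h y hy (p.2.removeNth (v p.1) k)) ?_ ?_ ?_ ?_
      · rw [← key]
        refine Finset.sum_congr rfl fun p hp => ?_
        rw [val_eH hn ω l hy]
        congr 2
        funext k
        exact (hmem p hp k).symm
      · intro p hp
        rw [omH_apply, funext (hmem p hp), cons_removeNth]
        refine mul_ne_zero (pow_ne_zero _ (by norm_num)) ?_
        intro hc
        have : y ∈ LinearMap.ker (cf ω (v p.1) p.2) := hc
        rw [(Finset.mem_filter.1 hp).2, LinearMap.mem_ker, hy] at this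
        exact one_ne_zero this
      · intro p hp k
        rw [LinearMap.comp_apply, Submodule.subtype_apply, hmem p hp]
        exact hl p.1 (Finset.mem_product.1 (Finset.mem_filter.1 hp).1).1 _
      · intro p hp m x hx
        exact absurd hx (Set.notMem_empty x)
      · have hj : ∀ᶠ x : LinearMap.ker h in gen (LinearMap.ker h), ∀ j ∈ s, ∀ᶠ ε in 𝓝[>] (0:ℝ),
            ind ω (v j) ((x : V) + (ε * 1) • y) - ind ω (v j) ((x : V) + (ε * (-1)) • y) =
            ∑ i : Fin (n+1), if LinearMap.ker (cf ω (v j) i) = LinearMap.ker h then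
              (-1) ^ (i : ℕ) * ind (omH ω h y)
                (fun k => prH h y hy (i.removeNth (v j) k)) x else 0 := by
          rw [Filter.eventually_all_finset]
          intro j hjs
          convert jump hn hy (v j) (hω j hjs)
        filter_upwards [hj, gen_hyper hy hS 1 one_ne_zero,
          gen_hyper hy hS (-1) (by norm_num)] with x hx1 hx2 hx3
        rw [← Filter.eventually_all_finset] at hx1
        obtain ⟨ε, e1, e2, e3⟩ := (hx1.and (hx2.and hx3)).exists
        rw [Finset.sum_filter, Finset.sum_product]
        have : ∑ j ∈ s, a j * (ind ω (v j) ((x : V) + (ε * 1) • y) -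
            ind ω (v j) ((x : V) + (ε * (-1)) • y)) = 0 := by
          simp only [mul_sub, Finset.sum_sub_distrib]
          rw [e2, e3, sub_zero]
        refine Eq.trans ?_ this
        refine Finset.sum_congr rfl fun j hjs => ?_
        rw [e1 j hjs, Finset.mul_sum]
        refine Finset.sum_congr rfl fun i _ => ?_
        simp only [mul_ite, mul_zero, mul_assoc]
    have hall : Germ.coeAddHom (gen V) (fun _ => ∑ j ∈ s, a j • val ω e (v j)) = 0 := by
      have e1 : (fun _ : V => ∑ j ∈ s, a j • val ω e (v j)) =
          ∑ j ∈ s, a j • (fun _ : V => val ω e (v j)) := by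
        funext u; simp
      rw [e1, map_sum]
      have e2 : ∀ j ∈ s, Germ.coeAddHom (gen V) (a j • (fun _ : V => val ω e (v j))) =
          ∑ i : Fin (n+1), (a j * (-1) ^ (i : ℕ)) • cg ω l e (i.removeNth (v j)) := by
        intro j hj
        rw [map_zsmul, cone_formula hn hl0 hX he (v j) (hl j hj) (hg j hj), Finset.smul_sum]
        simp only [smul_smul]
      rw [Finset.sum_congr rfl e2, ← Finset.sum_product (f := fun p : ι × Fin (n+1) =>
        (a p.1 * (-1) ^ (p.2 : ℕ)) • cg ω l e (p.2.removeNth (v p.1)))]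
      rw [← Finset.sum_fiberwise_of_maps_to
        (t := (s ×ˢ (Finset.univ : Finset (Fin (n+1)))).image
          (fun p => LinearMap.ker (cf ω (v p.1) p.2)))
        (fun p hp => Finset.mem_image_of_mem _ hp)]
      exact Finset.sum_eq_zero fun H _ => hfib H
    have h2 := Germ.coe_eq.1 hall
    obtain ⟨u, hu⟩ := h2.exists
    exact hu
end main

section final
open Filter Topology

/-- Homogenised space. -/
abbrev HV (d : ℕ) : Type := ℝ × EuclideanSpace ℝ (Fin d)

lemma finrank_HV (d : ℕ) : Module.finrank ℝ (HV d) = d + 1 := by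
  simp [HV, add_comm]

/-- A volume form on the homogenised space. -/
def om (d : ℕ) : (HV d) [⋀^Fin (d+1)]→ₗ[ℝ] ℝ :=
  (Module.finBasisOfFinrankEq ℝ (HV d) (finrank_HV d)).det

lemma om_ne {d : ℕ} {v : Fin (d+1) → HV d} (h : LinearIndependent ℝ v) : om d v ≠ 0 := by
  have := (Module.Basis.is_basis_iff_det (Module.finBasisOfFinrankEq ℝ (HV d) (finrank_HV d))
    (v := v)).1 ⟨h, h.span_eq_top_of_card_eq_finrank' (by simp [add_comm])⟩
  exact this.ne_zero

/-- Lifting points to height one. -/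
def hat {d n : ℕ} (p : Fin n → EuclideanSpace ℝ (Fin d)) : Fin n → HV d := fun k => (1, p k)

lemma sum_hat {d n : ℕ} (p : Fin n → EuclideanSpace ℝ (Fin d)) (c : Fin n → ℝ) :
    ∑ k, c k • hat p k = (∑ k, c k, ∑ k, c k • p k) := by
  ext1 <;> simp [hat, Prod.fst_sum, Prod.snd_sum]

lemma affInd_iff {d : ℕ} (p : Fin (d+1) → EuclideanSpace ℝ (Fin d)) :
    AffineIndependent ℝ p ↔ om d (hat p) ≠ 0 := by
  classical
  have h1 : AffineIndependent ℝ p ↔ LinearIndependent ℝ (hat p) := by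
    rw [Fintype.linearIndependent_iff, affineIndependent_iff]
    constructor
    · intro h g hg i
      rw [sum_hat, Prod.mk_eq_zero] at hg
      exact h Finset.univ g hg.1 hg.2 i (Finset.mem_univ i)
    · intro h s w h0 h1 i hi
      have := h (fun k => if k ∈ s then w k else 0) (by
        rw [sum_hat]
        simp only [ite_smul, zero_smul, Finset.sum_ite_mem, Finset.univ_inter, h0, h1]
        rfl) i
      simpa [hi] using this
  rw [h1]
  exact ⟨om_ne, linInd_of_ne⟩

lemma goodT_iff {d : ℕ} (p : Fin (d+1) → EuclideanSpace ℝ (Fin d)) (hp : om d (hat p) ≠ 0) :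
    (∀ k : Fin (d + 1), LinearIndependent ℝ (fun j : {j : Fin (d + 1) // j ≠ k} => p j.1)) ↔
      GoodT {((1, 0) : HV d)} (hat p) := by
  classical
  have hL := Fintype.linearIndependent_iff.1 (linInd_of_ne hp)
  have e1 : ∀ k (c : Fin (d+1) → ℝ), c k = 0 →
      ∑ j : {j : Fin (d+1) // j ≠ k}, c j.1 • p j.1 = ∑ j, c j • p j := by
    intro k c hc
    rw [← Finset.sum_subtype (Finset.univ.erase k) (fun x => by simp) (fun j => c j • p j)]
    exact Finset.sum_erase _ (by rw [hc, zero_smul])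
  constructor
  · intro h k x hx hm
    rw [Set.mem_singleton_iff] at hx
    subst hx
    obtain ⟨c, hc⟩ : ∃ c : Fin (d+1) → ℝ, c k = 0 ∧ ∑ j, c j • hat p j = (1, 0) := by
      refine Submodule.span_induction (p := fun z _ => ∃ c : Fin (d+1) → ℝ, c k = 0 ∧
        ∑ j, c j • hat p j = z) ?_ ?_ ?_ ?_ hm
      · rintro _ ⟨a, ha, rfl⟩
        refine ⟨Pi.single a 1, ?_, ?_⟩
        · rw [Pi.single_apply, if_neg]; exact fun hh => ha hh.symm
        · simp [Pi.single_apply]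
      · exact ⟨0, by simp, by simp⟩
      · rintro x y _ _ ⟨c, h1, h2⟩ ⟨c', h3, h4⟩
        refine ⟨c + c', by simp [h1, h3], ?_⟩
        simp [add_smul, Finset.sum_add_distrib, h2, h4]
      · rintro a x _ ⟨c, h1, h2⟩
        refine ⟨a • c, by simp [h1], ?_⟩
        rw [← h2, Finset.smul_sum]
        simp [mul_smul]
    rw [sum_hat, Prod.mk.injEq] at hc
    have hz := Fintype.linearIndependent_iff.1 (h k) (fun j => c j.1) (by
      rw [e1 k c hc.1, hc.2.2])
    have : ∑ j, c j = 0 := by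
      refine Finset.sum_eq_zero fun j _ => ?_
      by_cases hj : j = k
      · rw [hj, hc.1]
      · exact hz ⟨j, hj⟩
    rw [this] at hc
    exact zero_ne_one hc.2.1
  · intro h k
    rw [Fintype.linearIndependent_iff]
    intro g hg
    let c : Fin (d+1) → ℝ := fun j => if hj : j = k then 0 else g ⟨j, hj⟩
    have hck : c k = 0 := by simp [c]
    have hcj : ∀ j : {j : Fin (d+1) // j ≠ k}, c j.1 = g j := fun j => by simp [c, j.2]
    have hs : ∑ j, c j • p j = 0 := by
      rw [← e1 k c hck, ← hg]
      exact Finset.sum_congr rfl fun j _ => by rw [hcj]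
    by_cases h0 : ∑ j, c j = 0
    · intro i
      rw [← hcj]
      exact hL c (by rw [sum_hat, h0, hs]; rfl) i.1
    · exfalso
      refine h k (1, 0) rfl ?_
      have : ((1, 0) : HV d) = (∑ j, c j)⁻¹ • ∑ j, c j • hat p j := by
        rw [sum_hat, hs]; ext1 <;> simp [h0]
      rw [this]
      refine Submodule.smul_mem _ _ (Submodule.sum_mem _ fun j _ => ?_)
      by_cases hj : j = k
      · rw [hj, hck, zero_smul]; exact Submodule.zero_mem _
      · exact Submodule.smul_mem _ _ (Submodule.subset_span ⟨j, hj, rfl⟩)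

/-- barycentric coordinates (up to scaling) -/
lemma bary {d : ℕ} {p : Fin (d+1) → EuclideanSpace ℝ (Fin d)} (hp : om d (hat p) ≠ 0)
    (x : EuclideanSpace ℝ (Fin d)) :
    ∑ i, cf (om d) (hat p) i (1, x) / om d (hat p) = 1 ∧
    ∑ i, (cf (om d) (hat p) i (1, x) / om d (hat p)) • p i = x := by
  have h := cf_expand (ω := om d) (span_of_ne (finrank_HV d) hp) ((1, x) : HV d)
  have h2 : ∑ i, (cf (om d) (hat p) i (1, x) / om d (hat p)) • hat p i = (1, x) := by
    refine Eq.trans ?_ (inv_smul_smul₀ hp ((1, x) : HV d))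
    rw [h, Finset.smul_sum]
    refine Finset.sum_congr rfl fun i _ => ?_
    rw [smul_smul, div_eq_inv_mul]
  rw [sum_hat, Prod.mk.injEq] at h2
  exact h2

lemma aff_comb {d : ℕ} (φ : HV d →ₗ[ℝ] ℝ) (x y : EuclideanSpace ℝ (Fin d)) {a b : ℝ} (hab : a + b = 1) :
    φ (1, a • x + b • y) = a * φ (1, x) + b * φ (1, y) := by
  have : ((1, a • x + b • y) : HV d) = a • (1, x) + b • (1, y) := by
    ext1 <;> simp [hab]
  rw [this, map_add, map_smul, map_smul]; rfl

lemma mem_conv {d : ℕ} {p : Fin (d+1) → EuclideanSpace ℝ (Fin d)} (hp : om d (hat p) ≠ 0)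
    (x : EuclideanSpace ℝ (Fin d)) : x ∈ convexHull ℝ (Set.range p) ↔
      ∀ i, 0 ≤ cf (om d) (hat p) i (1, x) * om d (hat p) := by
  constructor
  · intro h i
    have : convexHull ℝ (Set.range p) ⊆ {x | 0 ≤ cf (om d) (hat p) i (1, x) * om d (hat p)} := by
      refine convexHull_min ?_ ?_
      · rintro _ ⟨k, rfl⟩
        have hk : cf (om d) (hat p) i (1, p k) = cf (om d) (hat p) i (hat p k) := rfl
        rw [Set.mem_ofPred_eq, hk]
        by_cases hik : i = k
        · subst hik; rw [cf_self]; exact mul_self_nonneg _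
        · rw [cf_ne _ _ hik, zero_mul]
      · intro x hx y hy a b ha hb hab
        rw [Set.mem_ofPred_eq] at *
        rw [aff_comb _ _ _ hab, add_mul, mul_assoc, mul_assoc]
        positivity
    exact this h
  · intro h
    obtain ⟨h1, h2⟩ := bary hp x
    refine mem_convexHull_of_exists_fintype _ p (fun i => ?_) h1 (fun i => ⟨i, rfl⟩) h2
    have := h i
    rw [div_eq_mul_inv]
    have e : cf (om d) (hat p) i (1, x) * (om d (hat p))⁻¹ =
      (cf (om d) (hat p) i (1, x) * om d (hat p)) * ((om d (hat p))⁻¹ * (om d (hat p))⁻¹) := by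
      field_simp
    rw [e]
    exact mul_nonneg this (mul_self_nonneg _)

lemma split_mem {d n : ℕ} (p : Fin n → EuclideanSpace ℝ (Fin d)) (c : Fin n → ℝ) (hc : ∀ k, 0 ≤ c k)
    (hs : ∑ k, c k = 1) {i j : Fin n} (hij : i ≠ j) {t : ℝ} (h0 : 0 < t) (h1 : t < 1)
    (hle : t * c i ≤ (1 - t) * c j) :
    ∑ k, c k • p k ∈ convexHull ℝ (Set.range (Function.update p i ((1 - t) • p i + t • p j))) := by
  classical
  have h1' : 0 < 1 - t := by linarith
  set s : ℝ := t * c i / (1 - t) with hsdef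
  have hs0 : 0 ≤ s := div_nonneg (mul_nonneg h0.le (hc i)) h1'.le
  have hsj : s ≤ c j := by rw [hsdef, div_le_iff₀ h1']; linarith
  have hst : (c i + s) * t = s := by rw [hsdef]; field_simp; ring
  refine mem_convexHull_of_exists_fintype
    (fun k => c k + ((Pi.single i s : Fin n → ℝ) k - (Pi.single j s : Fin n → ℝ) k))
    (Function.update p i ((1 - t) • p i + t • p j)) (fun k => ?_) ?_ (fun k => ⟨k, rfl⟩) ?_
  · by_cases hki : k = i
    · subst hki
      simp only [Pi.single_eq_same, Pi.single_eq_of_ne hij]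
      have := hc k; linarith
    · by_cases hkj : k = j
      · subst hkj
        simp only [Pi.single_eq_same, Pi.single_eq_of_ne hki]
        linarith
      · simp only [Pi.single_eq_of_ne hki, Pi.single_eq_of_ne hkj]
        have := hc k; linarith
  · simp [Finset.sum_add_distrib, Finset.sum_sub_distrib, hs]
  · have e : ∀ k, Function.update p i ((1 - t) • p i + t • p j) k =
        p k + (Pi.single i (t • (p j - p i)) : Fin n → EuclideanSpace ℝ (Fin d)) k := by
      intro k
      by_cases hki : k = i
      · subst hki; simp; module
      · simp [hki]
    simp only [e]
    simp only [smul_add, Finset.sum_add_distrib, add_smul, sub_smul, Finset.sum_sub_distrib]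
    have e1 : ∀ (a : Fin n) (f : Fin n → EuclideanSpace ℝ (Fin d)),
        ∑ k, (Pi.single a s : Fin n → ℝ) k • f k = s • f a := by
      intro a f; simp [Pi.single_apply]
    have e2 : ∑ k, c k • (Pi.single i (t • (p j - p i)) : Fin n → EuclideanSpace ℝ (Fin d)) k =
        c i • t • (p j - p i) := by
      simp [Pi.single_apply]
    rw [e1, e1, e1, e1, e2]
    simp only [Pi.single_eq_same, Pi.single_eq_of_ne hij.symm, smul_zero]
    have : (c i * t + s * t) • (p j - p i) = s • (p j - p i) := by rw [← add_mul, hst]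
    rw [add_smul, mul_smul, mul_smul, smul_sub s] at this
    have h3 : c i • t • (p j - p i) + (s • t • (p j - p i) - 0) + (s • p i - s • p j) = 0 := by
      rw [sub_zero, this]; abel
    rw [← add_zero (∑ k, c k • p k)]
    conv_rhs => rw [← h3]
    abel_nf

lemma conv_split {d : ℕ} {p : Fin (d+1) → EuclideanSpace ℝ (Fin d)} (hp : om d (hat p) ≠ 0)
    {i j : Fin (d+1)} (hij : i ≠ j) {t : ℝ} (h0 : 0 < t) (h1 : t < 1) :
    convexHull ℝ (Set.range p) =
      convexHull ℝ (Set.range (Function.update p i ((1 - t) • p i + t • p j))) ∪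
      convexHull ℝ (Set.range (Function.update p j ((1 - t) • p i + t • p j))) := by
  apply Set.Subset.antisymm
  · intro x hx
    have hx' := (mem_conv hp x).1 hx
    obtain ⟨b1, b2⟩ := bary hp x
    have hc : ∀ k, 0 ≤ cf (om d) (hat p) k (1, x) / om d (hat p) := fun k =>
      div_nonneg_iff.2 (mul_nonneg_iff.1 (hx' k))
    rw [← b2]
    rcases le_total (t * (cf (om d) (hat p) i (1, x) / om d (hat p)))
      ((1 - t) * (cf (om d) (hat p) j (1, x) / om d (hat p))) with h | h
    · exact Or.inl (split_mem p _ hc b1 hij h0 h1 h)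
    · have := split_mem p _ hc b1 hij.symm (t := 1 - t) (by linarith) (by linarith) (by
        rw [sub_sub_cancel]; exact h)
      rw [sub_sub_cancel, add_comm (t • p j)] at this
      exact Or.inr this
  · have hq : (1 - t) • p i + t • p j ∈ convexHull ℝ (Set.range p) :=
      convex_convexHull ℝ _ (subset_convexHull ℝ _ (Set.mem_range_self i))
        (subset_convexHull ℝ _ (Set.mem_range_self j))
        (by linarith) h0.le (by ring)
    have hh : ∀ m, convexHull ℝ (Set.range (Function.update p m ((1 - t) • p i + t • p j))) ⊆
        convexHull ℝ (Set.range p) := by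
      intro m
      refine convexHull_min ?_ (convex_convexHull ℝ _)
      rintro _ ⟨k, rfl⟩
      by_cases hk : k = m
      · subst hk; simpa using hq
      · rw [Function.update_of_ne hk]; exact subset_convexHull ℝ _ ⟨k, rfl⟩
    exact Set.union_subset (hh i) (hh j)

lemma conv_disj {d : ℕ} {p : Fin (d+1) → EuclideanSpace ℝ (Fin d)} (hp : om d (hat p) ≠ 0)
    {i j : Fin (d+1)} (hij : i ≠ j) {t : ℝ} (h0 : 0 < t) (h1 : t < 1) :
    Disjoint (interior (convexHull ℝ (Set.range (Function.update p i ((1 - t) • p i + t • p j)))))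
      (interior (convexHull ℝ (Set.range (Function.update p j ((1 - t) • p i + t • p j))))) := by
  set W := om d (hat p) with hW
  let g : HV d →ₗ[ℝ] ℝ := W • (t • cf (om d) (hat p) i - (1 - t) • cf (om d) (hat p) j)
  have ga : ∀ z, g z = W * (t * cf (om d) (hat p) i z - (1 - t) * cf (om d) (hat p) j z) :=
    fun z => rfl
  have gi : g (1, p i) = t * (W * W) := by
    have h1 : cf (om d) (hat p) i (1, p i) = W := cf_self _ _ _
    have h2 : cf (om d) (hat p) j (1, p i) = 0 := cf_ne _ (hat p) hij.symm
    rw [ga, h1, h2]; ring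
  have gj : g (1, p j) = - ((1 - t) * (W * W)) := by
    have h1 : cf (om d) (hat p) j (1, p j) = W := cf_self _ _ _
    have h2 : cf (om d) (hat p) i (1, p j) = 0 := cf_ne _ (hat p) hij
    rw [ga, h1, h2]; ring
  have gk : ∀ k, k ≠ i → k ≠ j → g (1, p k) = 0 := by
    intro k hi hj
    have h1 : cf (om d) (hat p) j (1, p k) = 0 := cf_ne _ (hat p) hj.symm
    have h2 : cf (om d) (hat p) i (1, p k) = 0 := cf_ne _ (hat p) hi.symm
    rw [ga, h1, h2]; ring
  have gq : g (1, (1 - t) • p i + t • p j) = 0 := by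
    rw [aff_comb _ _ _ (by ring), gi, gj]; ring
  have hWW : 0 < W * W := mul_self_pos.2 hp
  have hle : convexHull ℝ (Set.range (Function.update p i ((1 - t) • p i + t • p j))) ⊆
      {x | g (1, x) ≤ 0} := by
    refine convexHull_min ?_ ?_
    · rintro _ ⟨k, rfl⟩
      rw [Set.mem_ofPred_eq]
      by_cases hk : k = i
      · subst hk; rw [Function.update_self, gq]
      · rw [Function.update_of_ne hk]
        by_cases hkj : k = j
        · subst hkj; rw [gj]; nlinarith
        · rw [gk k hk hkj]
    · intro x hx y hy a b ha hb hab
      rw [Set.mem_ofPred_eq] at *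
      rw [aff_comb _ _ _ hab]
      nlinarith
  have hge : convexHull ℝ (Set.range (Function.update p j ((1 - t) • p i + t • p j))) ⊆
      {x | 0 ≤ g (1, x)} := by
    refine convexHull_min ?_ ?_
    · rintro _ ⟨k, rfl⟩
      rw [Set.mem_ofPred_eq]
      by_cases hk : k = j
      · subst hk; rw [Function.update_self, gq]
      · rw [Function.update_of_ne hk]
        by_cases hki : k = i
        · subst hki; rw [gi]; nlinarith
        · rw [gk k hki hk]
    · intro x hx y hy a b ha hb hab
      rw [Set.mem_ofPred_eq] at *
      rw [aff_comb _ _ _ hab]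
      positivity
  rw [Set.disjoint_left]
  intro x hx1 hx2
  have hz : ∀ᶠ y in 𝓝 x, g (1, y) = 0 := by
    filter_upwards [isOpen_interior.mem_nhds hx1, isOpen_interior.mem_nhds hx2] with y h1 h2
    exact le_antisymm (hle (interior_subset h1)) (hge (interior_subset h2))
  have hcont : Tendsto (fun ε : ℝ => x + ε • (p i - p j)) (𝓝[>] 0) (𝓝 x) := by
    have : Continuous (fun ε : ℝ => x + ε • (p i - p j)) := by fun_prop
    have h := this.tendsto 0
    rw [zero_smul, add_zero] at h
    exact h.mono_left nhdsWithin_le_nhds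
  obtain ⟨ε, hε, hpos⟩ := ((hcont.eventually hz).and self_mem_nhdsWithin).exists
  have e : ((1, x + ε • (p i - p j)) : HV d) = (1, x) + ε • ((1, p i) - (1, p j)) := by
    ext1 <;> simp
  rw [e, map_add, map_smul, map_sub, gi, gj, hz.self_of_nhds] at hε
  have : 0 < ε * (W * W) := mul_pos hpos hWW
  simp only [smul_eq_mul] at hε
  nlinarith

end final

section final2
open Filter Topology

/-- The relators. -/
def relators (d : ℕ) : Set (FreeAbelianGroup (NCSimplex d)) :=
  {x : FreeAbelianGroup (NCSimplex d) |
          ∃ Δ Δ₁ Δ₂ : NCSimplex d,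
            Δ.1 = Δ₁.1 ∪ Δ₂.1 ∧
            Disjoint (interior Δ₁.1) (interior Δ₂.1) ∧
            x = FreeAbelianGroup.of Δ - FreeAbelianGroup.of Δ₁ - FreeAbelianGroup.of Δ₂}

/-- The quotient by the relators. -/
abbrev QA (d : ℕ) : Type := FreeAbelianGroup (NCSimplex d) ⧸ AddSubgroup.closure (relators d)

/-- The class of a simplex in the quotient. -/
def cls {d : ℕ} (Δ : NCSimplex d) : QA d := QuotientAddGroup.mk (FreeAbelianGroup.of Δ)

/-- The class attached to a vertex set in the homogenised space. -/
def eQ (d : ℕ) (T : Set (HV d)) : QA d :=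
  open Classical in
  if h : ∃ Δ : NCSimplex d, Δ.1 = convexHull ℝ (Prod.snd '' T) then cls h.choose else 0

lemma snd_range_hat {d n : ℕ} (p : Fin n → EuclideanSpace ℝ (Fin d)) :
    Prod.snd '' (Set.range (hat p)) = Set.range p := by
  rw [← Set.range_comp]; rfl

lemma eQ_hat {d : ℕ} (Δ : NCSimplex d) (p : Fin (d+1) → EuclideanSpace ℝ (Fin d))
    (h : Δ.1 = convexHull ℝ (Set.range p)) : eQ d (Set.range (hat p)) = cls Δ := by
  have hex : ∃ Δ : NCSimplex d, Δ.1 = convexHull ℝ (Prod.snd '' (Set.range (hat p))) :=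
    ⟨Δ, by rw [snd_range_hat, h]⟩
  rw [eQ, dif_pos hex]
  congr 1
  refine Subtype.ext ?_
  rw [hex.choose_spec, snd_range_hat, h]

lemma exists_simplex {d : ℕ} {p : Fin (d+1) → EuclideanSpace ℝ (Fin d)} (hp : om d (hat p) ≠ 0)
    (hg : GoodT {((1, 0) : HV d)} (hat p)) : ∃ Δ : NCSimplex d, Δ.1 = convexHull ℝ (Set.range p) :=
  ⟨⟨_, p, (affInd_iff p).2 hp, (goodT_iff p hp).2 hg, rfl⟩, rfl⟩

lemma hat_update {d n : ℕ} (p : Fin n → EuclideanSpace ℝ (Fin d)) (m i j : Fin n) (t : ℝ) :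
    Function.update (hat p) m ((1 - t) • hat p i + t • hat p j) =
      hat (Function.update p m ((1 - t) • p i + t • p j)) := by
  funext k
  by_cases hk : k = m
  · subst hk
    simp only [Function.update_self, hat]
    ext1 <;> simp
  · simp only [Function.update_of_ne hk, hat]

lemma elem_eQ (d : ℕ) : Elem (om d) (LinearMap.fst ℝ ℝ _) {((1, 0) : HV d)} (eQ d) := by
  intro v i j t hω hl hij h0 h1 hg hg1 hg2
  obtain ⟨p, rfl⟩ : ∃ p, v = hat p := ⟨fun k => (v k).2, by
    funext k; exact Prod.ext (hl k) rfl⟩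
  have hω1 : om d (Function.update (hat p) i ((1 - t) • hat p i + t • hat p j)) ≠ 0 := by
    rw [omega_update_left _ _ _ _ hij]
    exact mul_ne_zero (by linarith) hω
  have hω2 : om d (Function.update (hat p) j ((1 - t) • hat p i + t • hat p j)) ≠ 0 := by
    rw [omega_update_right _ _ _ _ hij]
    exact mul_ne_zero h0.ne' hω
  rw [hat_update] at hω1 hω2 hg1 hg2 ⊢
  rw [hat_update]
  obtain ⟨Δ, hΔ⟩ := exists_simplex hω hg
  obtain ⟨Δ₁, hΔ₁⟩ := exists_simplex hω1 hg1
  obtain ⟨Δ₂, hΔ₂⟩ := exists_simplex hω2 hg2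
  rw [eQ_hat Δ _ hΔ, eQ_hat Δ₁ _ hΔ₁, eQ_hat Δ₂ _ hΔ₂]
  have hmem : FreeAbelianGroup.of Δ - FreeAbelianGroup.of Δ₁ - FreeAbelianGroup.of Δ₂ ∈
      AddSubgroup.closure (relators d) := by
    refine AddSubgroup.subset_closure ⟨Δ, Δ₁, Δ₂, ?_, ?_, rfl⟩
    · rw [hΔ, hΔ₁, hΔ₂]; exact conv_split hω hij h0 h1
    · rw [hΔ₁, hΔ₂]; exact conv_disj hω hij h0 h1
  have := (QuotientAddGroup.eq_zero_iff _).2 hmem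
  rw [sub_sub] at this
  exact sub_eq_zero.1 this

lemma ind_local {d : ℕ} {p : Fin (d+1) → EuclideanSpace ℝ (Fin d)} (hp : om d (hat p) ≠ 0)
    (x : EuclideanSpace ℝ (Fin d)) (hx : ∀ i, cf (om d) (hat p) i (1, x) ≠ 0) :
    ∀ᶠ y in 𝓝 x, (y ∈ convexHull ℝ (Set.range p) ↔
      ∀ i, 0 < cf (om d) (hat p) i (1, x) * om d (hat p)) := by
  have hc : ∀ i, Tendsto (fun y => cf (om d) (hat p) i (1, y) * om d (hat p)) (𝓝 x)
      (𝓝 (cf (om d) (hat p) i (1, x) * om d (hat p))) := by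
    intro i
    have h1 : Continuous (cf (om d) (hat p) i) := LinearMap.continuous_of_finiteDimensional _
    have : Continuous (fun y => cf (om d) (hat p) i (1, y) * om d (hat p)) := by fun_prop
    exact this.tendsto x
  by_cases h : ∀ i, 0 < cf (om d) (hat p) i (1, x) * om d (hat p)
  · have : ∀ᶠ y in 𝓝 x, ∀ i, 0 < cf (om d) (hat p) i (1, y) * om d (hat p) :=
      eventually_all.2 fun i => (hc i).eventually (lt_mem_nhds (h i))
    filter_upwards [this] with y hy
    exact ⟨fun _ => h, fun _ => (mem_conv hp y).2 fun i => (hy i).le⟩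
  · have h' := h
    push Not at h
    obtain ⟨i, hi⟩ := h
    have hi' := lt_of_le_of_ne hi (mul_ne_zero (hx i) hp)
    filter_upwards [(hc i).eventually (gt_mem_nhds hi')] with y hy
    refine ⟨fun hm => ?_, fun hm => absurd hm h'⟩
    exact absurd ((mem_conv hp y).1 hm i) (not_le.2 hy)

lemma cf_ne_zero {d : ℕ} {v : Fin (d+1) → HV d} (h : om d v ≠ 0) (i : Fin (d+1)) :
    cf (om d) v i ≠ 0 := by
  intro hc
  have := cf_self (om d) v i
  rw [hc] at this
  exact h this.symm

lemma free_sum {α : Type} (x : FreeAbelianGroup α) :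
    ∃ (s : Finset α) (n : α → ℤ), x = ∑ a ∈ s, n a • FreeAbelianGroup.of a := by
  refine ⟨(FreeAbelianGroup.toFinsupp x).support, FreeAbelianGroup.toFinsupp x, ?_⟩
  conv_lhs => rw [← Finsupp.toFreeAbelianGroup_toFinsupp x]
  rfl

lemma kernel_le (d : ℕ) : (FreeAbelianGroup.lift (simplexMeasure (d := d))).ker ≤
    AddSubgroup.closure (relators d) := by
  classical
  intro z hz
  obtain ⟨s, n, rfl⟩ := free_sum z
  rw [AddMonoidHom.mem_ker, map_sum] at hz
  simp only [map_zsmul, FreeAbelianGroup.lift_apply_of] at hz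
  let p : NCSimplex d → Fin (d+1) → EuclideanSpace ℝ (Fin d) := fun Δ => Δ.2.choose
  have hω : ∀ Δ, om d (hat (p Δ)) ≠ 0 := fun Δ => (affInd_iff _).1 Δ.2.choose_spec.1
  have hg : ∀ Δ, GoodT {((1, 0) : HV d)} (hat (p Δ)) := fun Δ =>
    (goodT_iff _ (hω Δ)).1 Δ.2.choose_spec.2.1
  have hΔ : ∀ Δ : NCSimplex d, Δ.1 = convexHull ℝ (Set.range (p Δ)) := fun Δ =>
    Δ.2.choose_spec.2.2
  have key := mainT (d+1) (HV d) (finrank_HV d) (om d) (LinearMap.fst ℝ ℝ _) {((1, 0) : HV d)}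
    (Set.finite_singleton _) (QA d) (eQ d) (elem_eQ d) (NCSimplex d) s
    (fun Δ => n Δ * sg (om d (hat (p Δ)))) (fun Δ => hat (p Δ)) (fun Δ _ => hω Δ)
    (fun Δ _ k => rfl) (fun Δ _ => hg Δ) ?_
  · rw [← QuotientAddGroup.eq_zero_iff]
    have : (QuotientAddGroup.mk (∑ a ∈ s, n a • FreeAbelianGroup.of a) : QA d) =
        ∑ a ∈ s, n a • cls a := by
      rw [← QuotientAddGroup.mk'_apply, map_sum]
      simp only [map_zsmul]
      rfl
    rw [this, ← key]
    refine Finset.sum_congr rfl fun Δ _ => ?_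
    rw [val, smul_smul, mul_assoc, sg_mul_self (hω Δ), mul_one, eQ_hat Δ _ (hΔ Δ)]
  · have hgen : ∀ᶠ z in gen (HV d), ∀ Δ ∈ s, ∀ i, cf (om d) (hat (p Δ)) i z ≠ 0 := by
      rw [Filter.eventually_all_finset]
      intro Δ _
      exact eventually_all.2 fun i => gen_ne (cf_ne_zero (hω Δ) i)
    have hfst : (LinearMap.fst ℝ ℝ (EuclideanSpace ℝ (Fin d))) ≠ 0 := by
      intro hc
      have := LinearMap.congr_fun hc (1, 0)
      simp at this
    filter_upwards [hgen, gen_ne hfst] with z hz1 hz2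
    have e1 : ∀ Δ, n Δ * sg (om d (hat (p Δ))) * ind (om d) (hat (p Δ)) z =
        n Δ * (if ∀ i, 0 < cf (om d) (hat (p Δ)) i z * om d (hat (p Δ)) then 1 else 0) := by
      intro Δ
      have hd : (∀ i, 0 < cf (om d) (hat (p Δ)) i z * om d (hat (p Δ))) ↔
          (∀ i, 0 < om d (Function.update (hat (p Δ)) i z) * om d (hat (p Δ))) := Iff.rfl
      rw [ind, mul_assoc]
      by_cases h : ∀ i, 0 < cf (om d) (hat (p Δ)) i z * om d (hat (p Δ))
      · rw [if_pos (hd.1 h), if_pos h, sg_mul_self (hω Δ)]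
      · rw [if_neg (fun h' => h (hd.2 h')), if_neg h, mul_zero]
    simp only [e1]
    rw [LinearMap.fst_apply] at hz2
    rcases lt_or_gt_of_ne hz2 with hneg | hpos
    · refine Finset.sum_eq_zero fun Δ _ => ?_
      rw [if_neg, mul_zero]
      intro h
      have h1 := cf_expand (ω := om d) (span_of_ne (finrank_HV d) (hω Δ)) z
      have h2 := congrArg (fun w : HV d => om d (hat (p Δ)) * w.1) h1
      simp only [Prod.smul_fst, smul_eq_mul, Prod.fst_sum, Finset.mul_sum] at h2
      have h3 : 0 ≤ om d (hat (p Δ)) * (om d (hat (p Δ)) * z.1) := by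
        rw [h2]
        refine Finset.sum_nonneg fun i _ => ?_
        have h5 : (hat (p Δ) i).1 = 1 := rfl
        rw [h5, mul_one, mul_comm]
        exact (h i).le
      have h4 : 0 < om d (hat (p Δ)) * om d (hat (p Δ)) := mul_self_pos.2 (hω Δ)
      nlinarith
    · set x : EuclideanSpace ℝ (Fin d) := z.1⁻¹ • z.2 with hx
      have hzx : z = z.1 • ((1, x) : HV d) := by
        ext1
        · simp
        · simp [hx, smul_smul, hz2]
      have ecf : ∀ Δ i, cf (om d) (hat (p Δ)) i z = z.1 * cf (om d) (hat (p Δ)) i (1, x) := by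
        intro Δ i
        conv_lhs => rw [hzx, map_smul, smul_eq_mul]
      have hne : ∀ Δ ∈ s, ∀ i, cf (om d) (hat (p Δ)) i (1, x) ≠ 0 := by
        intro Δ hs i hc
        apply hz1 Δ hs i
        rw [ecf, hc, mul_zero]
      have hiff : ∀ Δ, (∀ i, 0 < cf (om d) (hat (p Δ)) i z * om d (hat (p Δ))) ↔
          (∀ i, 0 < cf (om d) (hat (p Δ)) i (1, x) * om d (hat (p Δ))) := by
        intro Δ
        refine forall_congr' fun i => ?_
        rw [ecf, mul_assoc, mul_pos_iff_of_pos_left hpos]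
      simp only [hiff]
      have hloc : ∀ᶠ y in 𝓝 x, ∀ Δ ∈ s, (y ∈ Δ.1 ↔
          ∀ i, 0 < cf (om d) (hat (p Δ)) i (1, x) * om d (hat (p Δ))) := by
        rw [Filter.eventually_all_finset]
        intro Δ hs
        have := ind_local (hω Δ) x (hne Δ hs)
        rwa [← hΔ Δ] at this
      obtain ⟨r, hr, hball⟩ := Metric.eventually_nhds_iff_ball.1 hloc
      have hk := congrFun hz ⟨Metric.ball x r, Metric.isOpen_ball.measurableSet⟩
      simp only [Finset.sum_apply, Pi.smul_apply, Pi.zero_apply] at hk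
      have hvol : (volume (Metric.ball x r)).toReal ≠ 0 :=
        (ENNReal.toReal_pos (Metric.measure_ball_pos volume x hr).ne' measure_ball_lt_top.ne).ne'
      have hm : ∀ Δ ∈ s, simplexMeasure Δ ⟨Metric.ball x r, Metric.isOpen_ball.measurableSet⟩ =
          ((if ∀ i, 0 < cf (om d) (hat (p Δ)) i (1, x) * om d (hat (p Δ)) then 1 else 0 : ℤ) : ℝ) *
            (volume (Metric.ball x r)).toReal := by
        intro Δ hs
        rw [simplexMeasure]
        split_ifs with h
        · have : Δ.1 ∩ Metric.ball x r = Metric.ball x r :=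
            Set.inter_eq_right.2 fun y hy => (hball y hy Δ hs).2 h
          simp [this]
        · have : Δ.1 ∩ Metric.ball x r = ∅ :=
            Set.eq_empty_of_forall_notMem fun y hy => h ((hball y hy.2 Δ hs).1 hy.1)
          simp [this]
      have hk2 : (((∑ Δ ∈ s, n Δ * (if ∀ i, 0 < cf (om d) (hat (p Δ)) i (1, x) *
          om d (hat (p Δ)) then 1 else 0) : ℤ)) : ℝ) * (volume (Metric.ball x r)).toReal = 0 := by
        refine Eq.trans ?_ hk
        rw [Int.cast_sum, Finset.sum_mul]
        refine Finset.sum_congr rfl fun Δ hs => ?_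
        rw [hm Δ hs, zsmul_eq_mul, Int.cast_mul, mul_assoc]
      exact_mod_cast (mul_eq_zero.1 hk2).resolve_right hvol

lemma isCompact_simplex {d : ℕ} (Δ : NCSimplex d) : IsCompact Δ.1 := by
  obtain ⟨v, _, _, h⟩ := Δ.2
  rw [h]
  exact (Set.finite_range v).isCompact_convexHull ℝ

lemma convex_simplex {d : ℕ} (Δ : NCSimplex d) : Convex ℝ Δ.1 := by
  obtain ⟨v, _, _, h⟩ := Δ.2
  rw [h]
  exact convex_convexHull ℝ _

lemma le_kernel (d : ℕ) : AddSubgroup.closure (relators d) ≤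
    (FreeAbelianGroup.lift (simplexMeasure (d := d))).ker := by
  rw [AddSubgroup.closure_le]
  rintro _ ⟨Δ, Δ₁, Δ₂, hu, hd, rfl⟩
  rw [SetLike.mem_coe, AddMonoidHom.mem_ker, map_sub, map_sub]
  simp only [FreeAbelianGroup.lift_apply_of]
  rw [sub_sub, sub_eq_zero]
  funext s
  simp only [Pi.add_apply, simplexMeasure]
  rw [hu, Set.union_inter_distrib_right]
  have hfin : ∀ Δ : NCSimplex d, volume (Δ.1 ∩ s.1) ≠ ⊤ := fun Δ =>
    ((measure_mono Set.inter_subset_left).trans_lt (isCompact_simplex Δ).measure_lt_top).ne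
  rw [measure_union₀, ENNReal.toReal_add (hfin _) (hfin _)]
  · exact ((isCompact_simplex Δ₂).measurableSet.inter s.2).nullMeasurableSet
  · refine measure_mono_null (t := frontier Δ₁.1 ∪ frontier Δ₂.1) ?_
      (measure_union_null ((convex_simplex Δ₁).addHaar_frontier volume)
        ((convex_simplex Δ₂).addHaar_frontier volume))
    rintro x ⟨⟨h1, _⟩, ⟨h2, _⟩⟩
    by_cases hx : x ∈ interior Δ₁.1
    · exact Or.inr ⟨subset_closure h2, fun h => Set.disjoint_left.1 hd hx h⟩
    · exact Or.inl ⟨subset_closure h1, hx⟩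

end final2

/-- the kernel of the homomorphism `π` from the free abelian group on
non-codegenerate `d`-simplices to signed measures, sending a generator `Δ` to `[Δ]`, is
generated by the relators `(Δ) − (Δ₁) − (Δ₂)` where `Δ` is tiled by the two simplices
`Δ₁` and `Δ₂`. -/
theorem kernel_generated_by_elementary_dissections (d : ℕ) :
    (FreeAbelianGroup.lift (simplexMeasure (d := d))).ker =
      AddSubgroup.closure
        {x : FreeAbelianGroup (NCSimplex d) |
          ∃ Δ Δ₁ Δ₂ : NCSimplex d,
            Δ.1 = Δ₁.1 ∪ Δ₂.1 ∧
            Disjoint (interior Δ₁.1) (interior Δ₂.1) ∧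
            x = FreeAbelianGroup.of Δ - FreeAbelianGroup.of Δ₁ - FreeAbelianGroup.of Δ₂} := le_antisymm (kernel_le d) (le_kernel d)
end
end

section
/- Let Δ_1, …, Δ_n be d-simplices in ℝ^d. Then there exists a finite family T of d-simplices with pairwise disjoint interiors whose union is Δ_1 ∪ ⋯ ∪ Δ_n, which refines each Δ_i: for each i, the members of T contained in Δ_i have union Δ_i (so they tile Δ_i). -/
noncomputable section

namespace CommonRefine

open Set Function

/-- Sum of shifted weights. -/
lemma sum_shift {ι E : Type*} [Fintype ι] [DecidableEq ι] [AddCommGroup E] [Module ℝ E]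
    (v : ι → E) (w : ι → ℝ) (a b : ι) (c : ℝ) :
    ∑ i, (w i + c * ((if i = b then 1 else 0) - (if i = a then 1 else 0))) • v i
      = ∑ i, w i • v i + c • (v b - v a) := by
  simp only [add_smul, Finset.sum_add_distrib, mul_smul, sub_smul, ← Finset.smul_sum,
    Finset.sum_sub_distrib, ite_smul, one_smul, zero_smul, Finset.sum_ite_eq', Finset.mem_univ,
    if_true]

lemma sum_shift_one {ι : Type*} [Fintype ι] [DecidableEq ι]
    (w : ι → ℝ) (a b : ι) (c : ℝ) :
    ∑ i, (w i + c * ((if i = b then 1 else 0) - (if i = a then 1 else 0)))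
      = ∑ i, w i := by
  have := sum_shift (fun _ : ι => (1 : ℝ)) w a b c
  simpa using this

lemma sum_update {ι E : Type*} [Fintype ι] [DecidableEq ι] [AddCommGroup E] [Module ℝ E]
    (v : ι → E) (w : ι → ℝ) (a : ι) (p : E) :
    ∑ i, w i • update v a p i = ∑ i, w i • v i + w a • (p - v a) := by
  have : ∀ i, w i • update v a p i = w i • v i + (if i = a then w a • (p - v a) else 0) := by
    intro i
    by_cases h : i = a
    · subst h; simp [smul_sub]
    · simp [h]
  simp only [this, Finset.sum_add_distrib, Finset.sum_ite_eq', Finset.mem_univ, if_true]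

lemma affInd_update {ι E : Type*} [Fintype ι] [DecidableEq ι] [AddCommGroup E] [Module ℝ E]
    (v : ι → E) (hv : AffineIndependent ℝ v) (a b : ι) (hab : a ≠ b) (α β : ℝ) (hα : 0 < α)
    (h1 : α + β = 1) : AffineIndependent ℝ (update v a (α • v a + β • v b)) := by
  rw [affineIndependent_iff_of_fintype] at hv ⊢
  intro w hw hs
  rw [Finset.weightedVSub_eq_linear_combination _ hw, sum_update] at hs
  set w' : ι → ℝ := fun i =>
    w i + (w a * β) * ((if i = b then 1 else 0) - (if i = a then 1 else 0)) with hw'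
  have hsum : ∑ i, w' i = 0 := by rw [hw', sum_shift_one, hw]
  have hα' : α = 1 - β := by linarith
  have h2 : ∑ i, w' i • v i = 0 := by
    rw [hw', sum_shift, ← hs, hα']
    congr 1
    module
  have h3 := hv w' hsum (by rw [Finset.weightedVSub_eq_linear_combination _ hsum]; exact h2)
  have ha : w a = 0 := by
    have := h3 a
    simp only [hw', if_neg hab, if_true] at this
    have h4 : w a * α = 0 := by rw [hα']; linarith
    rcases mul_eq_zero.1 h4 with h | h
    · exact h
    · exact absurd h hα.ne'
  intro i
  have := h3 i
  simp only [hw', ha] at this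
  simpa using this

lemma exists_weights {ι E : Type*} [Fintype ι] [AddCommGroup E] [Module ℝ E]
    (v : ι → E) {x : E} (hx : x ∈ convexHull ℝ (range v)) :
    ∃ w : ι → ℝ, (∀ i, 0 ≤ w i) ∧ ∑ i, w i = 1 ∧ ∑ i, w i • v i = x := by
  have h : convexHull ℝ (range v) ⊆ {x | ∃ w : ι → ℝ, (∀ i, 0 ≤ w i) ∧ ∑ i, w i = 1 ∧
      ∑ i, w i • v i = x} := by
    classical
    apply convexHull_min
    · rintro _ ⟨i, rfl⟩
      refine ⟨fun j => if j = i then 1 else 0, fun j => by positivity, by simp, by simp⟩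
    · rintro x ⟨w, h1, h2, rfl⟩ y ⟨u, h3, h4, rfl⟩ s t hs ht hst
      refine ⟨fun i => s * w i + t * u i, fun i => ?_, ?_, ?_⟩
      · have := h1 i
        have := h3 i
        positivity
      · rw [Finset.sum_add_distrib, ← Finset.mul_sum, ← Finset.mul_sum, h2, h4]; linarith
      · simp only [add_smul, Finset.sum_add_distrib, mul_smul, Finset.smul_sum]
  exact h hx

lemma cover_aux {ι E : Type*} [Fintype ι] [DecidableEq ι] [AddCommGroup E] [Module ℝ E]
    (v : ι → E) (a b : ι) (hab : a ≠ b) (α β : ℝ) (hα : 0 < α)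
    (h1 : α + β = 1) (w : ι → ℝ) (hw : ∀ i, 0 ≤ w i) (hw1 : ∑ i, w i = 1)
    (hle : β * w a ≤ α * w b) :
    ∑ i, w i • v i ∈ convexHull ℝ (range (update v a (α • v a + β • v b))) := by
  have hβ : β = 1 - α := by linarith
  set c : ℝ := - (w a * β / α) with hc
  set w' : ι → ℝ := fun i =>
    w i + c * ((if i = b then 1 else 0) - (if i = a then 1 else 0)) with hw'
  have ha : w' a = w a / α := by
    simp only [hw', if_neg hab, if_true, hc]
    rw [hβ]; field_simp; ring
  refine mem_convexHull_of_exists_fintype w' (update v a (α • v a + β • v b)) ?_ ?_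
    (fun i => mem_range_self i) ?_
  · intro i
    by_cases hia : i = a
    · rw [hia, ha]; exact div_nonneg (hw a) hα.le
    · by_cases hib : i = b
      · subst hib
        simp only [hw', if_neg hia, if_true, hc]
        have : w a * β / α ≤ w i := by
          rw [div_le_iff₀ hα]; linarith
        linarith
      · simpa [hw', hia, hib] using hw i
  · rw [hw', sum_shift_one, hw1]
  · rw [sum_update, ha, hw', sum_shift, add_assoc]
    have h2 : α • v a + β • v b - v a = β • (v b - v a) := by
      rw [show α = 1 - β by linarith]; module
    rw [h2, smul_smul, ← add_smul, hc]
    have : -(w a * β / α) + w a / α * β = 0 := by ring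
    rw [this, zero_smul, add_zero]

set_option linter.unusedSectionVars false

section top
variable {E : Type*} [NormedAddCommGroup E] [NormedSpace ℝ E] [FiniteDimensional ℝ E]

lemma disjoint_interior (g : E →ᵃ[ℝ] ℝ) {y z : E} (hyz : g y ≠ g z) {A B : Set E}
    (hA : ∀ x ∈ A, 0 ≤ g x) (hB : ∀ x ∈ B, g x ≤ 0) :
    Disjoint (interior A) (interior B) := by
  rw [Set.disjoint_left]
  intro x hxA hxB
  have hg0 : ∀ x ∈ interior A ∩ interior B, g x = 0 := fun x hx =>
    le_antisymm (hB x (interior_subset hx.2)) (hA x (interior_subset hx.1))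
  have hc : Filter.Tendsto (fun t : ℝ => x + t • (y - z)) (nhds 0) (nhds x) := by
    have : Continuous (fun t : ℝ => x + t • (y - z)) := by fun_prop
    simpa using this.tendsto 0
  have hev := hc.eventually ((isOpen_interior.inter isOpen_interior).mem_nhds ⟨hxA, hxB⟩)
  have hev2 : ∀ᶠ t : ℝ in nhdsWithin 0 {0}ᶜ, x + t • (y - z) ∈ interior A ∩ interior B :=
    hev.filter_mono nhdsWithin_le_nhds
  obtain ⟨t, ht, ht0⟩ := (hev2.and self_mem_nhdsWithin).exists
  have h1 := hg0 _ ht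
  have h2 := hg0 x ⟨hxA, hxB⟩
  have h3 : g (x + t • (y - z)) = t * (g y - g z) + g x := by
    have := g.map_vadd x (t • (y - z))
    have h4 := g.linearMap_vsub y z
    simp only [vadd_eq_add, map_smul, smul_eq_mul, vsub_eq_sub] at this h4
    rw [add_comm, this, h4]
  rw [h1, h2, add_zero] at h3
  rcases mul_eq_zero.1 h3.symm with h | h
  · exact ht0 h
  · exact hyz (sub_eq_zero.1 h)

lemma hull_nonneg {ι : Type*} (v : ι → E) (g : E →ᵃ[ℝ] ℝ) (h : ∀ i, 0 ≤ g (v i)) :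
    ∀ x ∈ convexHull ℝ (range v), 0 ≤ g x := by
  have : convexHull ℝ (range v) ⊆ g ⁻¹' (Ici 0) :=
    convexHull_min (by rintro _ ⟨i, rfl⟩; exact h i) ((convex_Ici 0).affine_preimage g)
  exact fun x hx => this hx

lemma hull_nonpos {ι : Type*} (v : ι → E) (g : E →ᵃ[ℝ] ℝ) (h : ∀ i, g (v i) ≤ 0) :
    ∀ x ∈ convexHull ℝ (range v), g x ≤ 0 := by
  have : convexHull ℝ (range v) ⊆ g ⁻¹' (Iic 0) :=
    convexHull_min (by rintro _ ⟨i, rfl⟩; exact h i) ((convex_Iic 0).affine_preimage g)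
  exact fun x hx => this hx

/-- `T` is a finite tiling of `R`. -/
structure IsTiling {ι : Type*} (T : Set (ι → E)) (R : Set E) : Prop where
  fin : T.Finite
  ind : ∀ t ∈ T, AffineIndependent ℝ t
  disj : ∀ t ∈ T, ∀ s ∈ T, t ≠ s →
    Disjoint (interior (convexHull ℝ (range t))) (interior (convexHull ℝ (range s)))
  cover : ⋃ t ∈ T, convexHull ℝ (range t) = R

lemma IsTiling.sub {ι : Type*} {T : Set (ι → E)} {R : Set E} (h : IsTiling T R) {t : ι → E}
    (ht : t ∈ T) : convexHull ℝ (range t) ⊆ R := by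
  rw [← h.cover]; exact subset_biUnion_of_mem (u := fun t => convexHull ℝ (range t)) ht

lemma IsTiling.refine {ι : Type*} {T : Set (ι → E)} {R : Set E} (h : IsTiling T R)
    (P : (ι → E) → Prop)
    (hP : ∀ t ∈ T, ∃ T', IsTiling T' (convexHull ℝ (range t)) ∧ ∀ t' ∈ T', P t') :
    ∃ T' : Set (ι → E), IsTiling T' R ∧ ∀ t' ∈ T', P t' := by
  choose! F hF hFP using hP
  refine ⟨⋃ t ∈ T, F t, ⟨?_, ?_, ?_, ?_⟩, ?_⟩
  · exact h.fin.biUnion fun t ht => (hF t ht).fin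
  · intro t ht
    obtain ⟨u, hu, htu⟩ := mem_iUnion₂.1 ht
    exact (hF u hu).ind t htu
  · intro t ht s hs hts
    obtain ⟨u, hu, htu⟩ := mem_iUnion₂.1 ht
    obtain ⟨u', hu', hsu⟩ := mem_iUnion₂.1 hs
    by_cases huu : u = u'
    · subst huu; exact (hF u hu).disj t htu s hsu hts
    · exact (h.disj u hu u' hu' huu).mono (interior_mono ((hF u hu).sub htu))
        (interior_mono ((hF u' hu').sub hsu))
  · rw [← h.cover]
    simp only [biUnion_iUnion]
    exact iUnion₂_congr fun t ht => (hF t ht).cover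
  · intro t ht
    obtain ⟨u, hu, htu⟩ := mem_iUnion₂.1 ht
    exact hFP u hu t htu

lemma isTiling_singleton {ι : Type*} (v : ι → E) (hv : AffineIndependent ℝ v) :
    IsTiling {v} (convexHull ℝ (range v)) := by
  refine ⟨finite_singleton _, ?_, ?_, by simp⟩
  · rintro t rfl; exact hv
  · rintro t rfl s rfl h; exact absurd rfl h

variable {ι : Type*} [Fintype ι] [DecidableEq ι]

/-- the affine basis attached to a full-dimensional simplex -/
def basis (hcard : Fintype.card ι = Module.finrank ℝ E + 1) (v : ι → E)
    (hv : AffineIndependent ℝ v) : AffineBasis ι ℝ E :=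
  ⟨v, hv, hv.affineSpan_eq_top_iff_card_eq_finrank_add_one.2 hcard⟩

lemma hull_update_sub (v : ι → E) (a b : ι) (c : ι) (α β : ℝ) (hα : 0 < α)
    (hβ : 0 < β) (h1 : α + β = 1) :
    convexHull ℝ (range (update v c (α • v a + β • v b))) ⊆ convexHull ℝ (range v) := by
  apply convexHull_min _ (convex_convexHull _ _)
  rintro _ ⟨i, rfl⟩
  have hm : ∀ i, v i ∈ convexHull ℝ (range v) := fun i => subset_convexHull _ _ (mem_range_self i)
  by_cases h : i = c
  · subst h
    simp only [update_self]
    exact convex_convexHull ℝ (range v) (hm a) (hm b) hα.le hβ.le h1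
  · simp only [update_of_ne h]; exact hm i

lemma bisect (hcard : Fintype.card ι = Module.finrank ℝ E + 1) (v : ι → E)
    (hv : AffineIndependent ℝ v) (a b : ι) (hab : a ≠ b) (α β : ℝ) (hα : 0 < α)
    (hβ : 0 < β) (h1 : α + β = 1) :
    IsTiling {update v a (α • v a + β • v b), update v b (α • v a + β • v b)}
      (convexHull ℝ (range v)) := by
  have hcomm : α • v a + β • v b = β • v b + α • v a := add_comm _ _
  have hd : Disjoint (interior (convexHull ℝ (range (update v a (α • v a + β • v b)))))
      (interior (convexHull ℝ (range (update v b (α • v a + β • v b))))) := by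
    set B := basis hcard v hv with hB
    have hBv : ∀ i, B i = v i := fun i => rfl
    have hBc : ∀ i j, B.coord i (v j) = if i = j then 1 else 0 := fun i j => by
      rw [← hBv, AffineBasis.coord_apply]
    set g : E →ᵃ[ℝ] ℝ := α • B.coord b - β • B.coord a with hg
    have hgv : ∀ i, g (v i) = α * (if b = i then 1 else 0) - β * (if a = i then 1 else 0) := by
      intro i
      simp [hg, hBc]
    have hga : g (v a) = -β := by rw [hgv]; simp [hab.symm]
    have hgb : g (v b) = α := by rw [hgv]; simp [hab]
    have hgp : g (α • v a + β • v b) = 0 := by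
      rw [Convex.combo_affine_apply h1, hga, hgb]
      simp only [smul_eq_mul]; ring
    refine disjoint_interior g (y := v a) (z := v b) ?_ ?_ ?_
    · rw [hga, hgb]; linarith
    · apply hull_nonneg
      intro i
      by_cases hi : i = a
      · subst hi; simp [hgp]
      · rw [update_of_ne hi, hgv, if_neg (Ne.symm hi)]
        split_ifs <;> linarith
    · apply hull_nonpos
      intro i
      by_cases hi : i = b
      · subst hi; simp [hgp]
      · rw [update_of_ne hi, hgv, if_neg (Ne.symm hi)]
        split_ifs <;> linarith
  refine ⟨by simp, ?_, ?_, ?_⟩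
  · rintro t (rfl | rfl)
    · exact affInd_update v hv a b hab α β hα h1
    · rw [hcomm]
      exact affInd_update v hv b a hab.symm β α hβ (by linarith)
  · rintro t (rfl | rfl) s (rfl | rfl) h
    · exact absurd rfl h
    · exact hd
    · exact hd.symm
    · exact absurd rfl h
  · rw [biUnion_pair]
    apply Subset.antisymm
    · exact union_subset (hull_update_sub v a b a α β hα hβ h1)
        (hull_update_sub v a b b α β hα hβ h1)
    · intro x hx
      obtain ⟨w, hw, hw1, rfl⟩ := exists_weights v hx
      rcases le_total (β * w a) (α * w b) with h | h
      · exact Or.inl (cover_aux v a b hab α β hα h1 w hw hw1 h)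
      · right
        rw [hcomm]
        exact cover_aux v b a hab.symm β α hβ (by linarith) w hw hw1 h

/-- `f` has constant (weak) sign on the hull of `t`. -/
def Signed (f : E →ᵃ[ℝ] ℝ) (t : ι → E) : Prop :=
  (∀ x ∈ convexHull ℝ (range t), 0 ≤ f x) ∨ (∀ x ∈ convexHull ℝ (range t), f x ≤ 0)

lemma split (hcard : Fintype.card ι = Module.finrank ℝ E + 1) (f : E →ᵃ[ℝ] ℝ) (N : ℕ) :
    ∀ v : ι → E, AffineIndependent ℝ v → (Finset.univ.filter fun i => f (v i) ≠ 0).card ≤ N →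
    ∃ T : Set (ι → E), IsTiling T (convexHull ℝ (range v)) ∧ ∀ t ∈ T, Signed f t := by
  induction N with
  | zero =>
    intro v hv hN
    refine ⟨{v}, isTiling_singleton v hv, ?_⟩
    rintro t rfl
    left
    apply hull_nonneg
    intro i
    have h0 := Finset.card_eq_zero.1 (Nat.le_zero.1 hN)
    have := Finset.filter_eq_empty_iff.1 h0 (Finset.mem_univ i)
    simp only [ne_eq, not_not] at this
    exact this.ge
  | succ N ih =>
    intro v hv hN
    by_cases hpos : ∀ i, 0 ≤ f (v i)
    · refine ⟨{v}, isTiling_singleton v hv, ?_⟩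
      rintro t rfl
      exact Or.inl (hull_nonneg _ _ hpos)
    by_cases hneg : ∀ i, f (v i) ≤ 0
    · refine ⟨{v}, isTiling_singleton v hv, ?_⟩
      rintro t rfl
      exact Or.inr (hull_nonpos _ _ hneg)
    push Not at hpos hneg
    obtain ⟨a, ha⟩ := hpos
    obtain ⟨b, hb⟩ := hneg
    have hab : a ≠ b := by rintro rfl; linarith
    have hden : 0 < f (v b) - f (v a) := by linarith
    set α := f (v b) / (f (v b) - f (v a)) with hα
    set β := - f (v a) / (f (v b) - f (v a)) with hβ
    have hα0 : 0 < α := div_pos hb hden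
    have hβ0 : 0 < β := div_pos (by linarith) hden
    have h1 : α + β = 1 := by
      rw [hα, hβ]; field_simp; ring
    have hp : f (α • v a + β • v b) = 0 := by
      rw [Convex.combo_affine_apply h1, hα, hβ]
      simp only [smul_eq_mul]
      field_simp; ring
    have hT := bisect hcard v hv a b hab α β hα0 hβ0 h1
    have hc : ∀ c, f (v c) ≠ 0 → (Finset.univ.filter fun i =>
        f (update v c (α • v a + β • v b) i) ≠ 0).card ≤ N := by
      intro c hc
      have : (Finset.univ.filter fun i => f (update v c (α • v a + β • v b) i) ≠ 0) ⊂
          (Finset.univ.filter fun i => f (v i) ≠ 0) := by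
        rw [Finset.ssubset_iff_of_subset]
        · refine ⟨c, by simpa using hc, by simp [hp]⟩
        · intro i
          simp only [Finset.mem_filter, Finset.mem_univ, true_and]
          by_cases hi : i = c
          · subst hi; simp [hp]
          · simp [update_of_ne hi]
      have := Finset.card_lt_card this
      omega
    refine hT.refine _ ?_
    intro t ht
    refine ih t (hT.ind t ht) ?_
    rcases ht with rfl | rfl
    · exact hc a ha.ne
    · exact hc b hb.ne'

lemma multisplit (hcard : Fintype.card ι = Module.finrank ℝ E + 1) (F : Set (E →ᵃ[ℝ] ℝ))
    (hF : F.Finite) (v : ι → E) (hv : AffineIndependent ℝ v) :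
    ∃ T : Set (ι → E), IsTiling T (convexHull ℝ (range v)) ∧ ∀ t ∈ T, ∀ f ∈ F, Signed f t := by
  induction F, hF using Set.Finite.induction_on with
  | empty => exact ⟨{v}, isTiling_singleton v hv, by simp⟩
  | @insert f F _ _ ih =>
    obtain ⟨T, hT, hTF⟩ := ih
    refine hT.refine _ ?_
    intro t ht
    obtain ⟨T', hT', hs⟩ := split hcard f _ t (hT.ind t ht) le_rfl
    refine ⟨T', hT', ?_⟩
    rintro t' ht' g (rfl | hg)
    · exact hs t' ht'
    · rcases hTF t ht g hg with h | h
      · exact Or.inl fun x hx => h x (hT'.sub ht' hx)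
      · exact Or.inr fun x hx => h x (hT'.sub ht' hx)

lemma main (hcard : Fintype.card ι = Module.finrank ℝ E + 1) (n : ℕ) (v : Fin n → ι → E)
    (hv : ∀ i, AffineIndependent ℝ (v i)) :
    ∃ T : Set (ι → E), IsTiling T (⋃ i, convexHull ℝ (range (v i))) ∧
      ∀ i, (⋃ t ∈ {t ∈ T | convexHull ℝ (range t) ⊆ convexHull ℝ (range (v i))},
        convexHull ℝ (range t)) = convexHull ℝ (range (v i)) := by
  set B : Fin n → AffineBasis ι ℝ E := fun i => basis hcard (v i) (hv i) with hB
  have hBv : ∀ i, (B i : ι → E) = v i := fun i => rfl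
  have hBc : ∀ k i, (B k).coord i (v k i) = 1 := fun k i => (B k).coord_apply_eq i
  set F : Set (E →ᵃ[ℝ] ℝ) := range (fun q : Fin n × ι => (B q.1).coord q.2) with hF
  have hull_eq : ∀ i, convexHull ℝ (range (v i)) = {x | ∀ j, 0 ≤ (B i).coord j x} := fun i => by
    rw [← hBv, AffineBasis.convexHull_eq_nonneg_coord]
  have int_eq : ∀ i, interior (convexHull ℝ (range (v i))) = {x | ∀ j, 0 < (B i).coord j x} :=
    fun i => by rw [← hBv, AffineBasis.interior_convexHull]
  choose T hT hTF using fun i => multisplit hcard F (finite_range _) (v i) (hv i)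
  have key : ∀ t : ι → E, (∀ f ∈ F, Signed f t) → ∀ i,
      convexHull ℝ (range t) ⊆ convexHull ℝ (range (v i)) ∨
      ∃ j, (∀ x ∈ convexHull ℝ (range t), (B i).coord j x ≤ 0) ∧
        ∃ x, (B i).coord j x < 0 := by
    intro t ht i
    by_cases h : convexHull ℝ (range t) ⊆ convexHull ℝ (range (v i))
    · exact Or.inl h
    right
    obtain ⟨x, hx, hxn⟩ := Set.not_subset.1 h
    rw [hull_eq] at hxn
    simp only [mem_setOf_eq, not_forall, not_le] at hxn
    obtain ⟨j, hj⟩ := hxn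
    refine ⟨j, ?_, x, hj⟩
    rcases ht _ ⟨(i, j), rfl⟩ with h' | h'
    · exact absurd (h' x hx) (not_le.2 hj)
    · exact h'
  set U : Set (ι → E) := {t | ∃ i, t ∈ T i ∧
    ∀ j < i, ¬ convexHull ℝ (range t) ⊆ convexHull ℝ (range (v j))} with hU
  have hUfin : U.Finite := by
    refine (finite_iUnion fun i => (hT i).fin).subset ?_
    rintro t ⟨i, hi, _⟩
    exact mem_iUnion.2 ⟨i, hi⟩
  have hUF : ∀ t ∈ U, ∀ f ∈ F, Signed f t := by
    rintro t ⟨i, hi, _⟩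
    exact hTF i t hi
  have hlt : ∀ i j, i < j → ∀ t ∈ T i, ∀ s ∈ T j,
      (¬ convexHull ℝ (range s) ⊆ convexHull ℝ (range (v i))) →
      Disjoint (interior (convexHull ℝ (range t))) (interior (convexHull ℝ (range s))) := by
    intro i j _ t ht s hs hn
    rcases key s (hTF j s hs) i with h | ⟨k, hk, x, hx⟩
    · exact absurd h hn
    · refine disjoint_interior ((B i).coord k) (y := x) (z := v i k) ?_ ?_ hk
      · rw [hBc]; linarith
      · intro y hy
        have := (hT i).sub ht hy
        rw [hull_eq] at this
        exact this k
  have hUT : IsTiling U (⋃ i, convexHull ℝ (range (v i))) := by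
    refine ⟨hUfin, ?_, ?_, ?_⟩
    · rintro t ⟨i, hi, _⟩
      exact (hT i).ind t hi
    · rintro t ⟨i, hi, hi'⟩ s ⟨j, hj, hj'⟩ hts
      rcases lt_trichotomy i j with h | h | h
      · exact hlt i j h t hi s hj (hj' i h)
      · subst h; exact (hT i).disj t hi s hj hts
      · exact (hlt j i h s hj t hi (hi' j h)).symm
    · apply Subset.antisymm
      · refine iUnion₂_subset ?_
        rintro t ⟨i, hi, _⟩
        exact ((hT i).sub hi).trans
          (subset_iUnion (fun i => convexHull ℝ (range (v i))) i)
      · refine iUnion_subset fun i => ?_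
        induction i using WellFoundedLT.induction with
        | ind i ih =>
          intro x hx
          have hx' := hx
          rw [← (hT i).cover] at hx'
          obtain ⟨t, ht, hxt⟩ := mem_iUnion₂.1 hx'
          by_cases h : ∃ j < i, convexHull ℝ (range t) ⊆ convexHull ℝ (range (v j))
          · obtain ⟨j, hji, hj⟩ := h
            exact ih j hji (hj hxt)
          · push Not at h
            exact mem_iUnion₂.2 ⟨t, ⟨i, ht, h⟩, hxt⟩
  refine ⟨U, hUT, fun i => ?_⟩
  apply Subset.antisymm
  · exact iUnion₂_subset fun t ht => ht.2
  · have hcl : IsClosed (⋃ t ∈ {t ∈ U | convexHull ℝ (range t) ⊆ convexHull ℝ (range (v i))},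
        convexHull ℝ (range t)) :=
      (hUfin.subset (sep_subset _ _)).isClosed_biUnion
        fun t _ => (finite_range t).isClosed_convexHull ℝ
    have hne : (interior (convexHull ℝ (range (v i)))).Nonempty := by
      rw [interior_convexHull_nonempty_iff_affineSpan_eq_top]
      exact (B i).tot
    refine subset_closure.trans ?_
    rw [← (convex_convexHull ℝ (range (v i))).closure_interior_eq_closure_of_nonempty_interior hne]
    refine closure_minimal ?_ hcl
    intro x hx
    have hx2 : x ∈ ⋃ i, convexHull ℝ (range (v i)) := mem_iUnion.2 ⟨i, interior_subset hx⟩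
    rw [← hUT.cover] at hx2
    obtain ⟨t, ht, hxt⟩ := mem_iUnion₂.1 hx2
    rcases key t (hUF t ht) i with h | ⟨j, hj, _⟩
    · exact mem_iUnion₂.2 ⟨t, ⟨ht, h⟩, hxt⟩
    · rw [int_eq] at hx
      exact absurd (hx j) (not_lt.2 (hj x hxt))

end top

end CommonRefine

/-- any finite family of `d`-simplices in `ℝ^d` admits a common refinement:
a finite family of `d`-simplices with pairwise disjoint interiors whose union is the union of
the given simplices, and such that for each given simplex the members contained in it tile it. -/
theorem exists_common_refining_tiling
    {d : ℕ} (n : ℕ)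
    (v : Fin n → Fin (d + 1) → EuclideanSpace ℝ (Fin d))
    -- each `Δᵢ = conv {v i 0, …, v i d}` is a `d`-simplex
    (haff : ∀ i, AffineIndependent ℝ (v i)) :
    ∃ (m : ℕ) (t : Fin m → Fin (d + 1) → EuclideanSpace ℝ (Fin d)),
      -- the members of the family are `d`-simplices
      (∀ k, AffineIndependent ℝ (t k)) ∧
      -- with pairwise disjoint interiors
      (∀ k l, k ≠ l → Disjoint (interior (convexHull ℝ (Set.range (t k))))
        (interior (convexHull ℝ (Set.range (t l))))) ∧
      -- whose union is `Δ₁ ∪ ⋯ ∪ Δₙ`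
      ((⋃ k, convexHull ℝ (Set.range (t k))) = ⋃ i, convexHull ℝ (Set.range (v i))) ∧
      -- and which refines each `Δᵢ`: the members contained in `Δᵢ` have union `Δᵢ`
      (∀ i, (⋃ k ∈ {k : Fin m |
          convexHull ℝ (Set.range (t k)) ⊆ convexHull ℝ (Set.range (v i))},
        convexHull ℝ (Set.range (t k))) = convexHull ℝ (Set.range (v i))) := by
  obtain ⟨T, hT, hTi⟩ := CommonRefine.main (ι := Fin (d + 1))
    (E := EuclideanSpace ℝ (Fin d)) (by simp) n v haff
  obtain ⟨m, t, ht, hr⟩ := hT.fin.fin_param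
  have hmem : ∀ k, t k ∈ T := fun k => hr ▸ Set.mem_range_self k
  refine ⟨m, t, fun k => hT.ind _ (hmem k),
    fun k l hkl => hT.disj _ (hmem k) _ (hmem l) (ht.ne hkl), ?_, fun i => ?_⟩
  · rw [← hT.cover, ← hr, Set.biUnion_range]
  · refine Eq.trans ?_ (hTi i)
    subst hr
    ext x
    simp
end
end
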